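/- Let a ≥ 1, d ∈ ℕ, β ∈ (0,∞), K ≥ 1 and ν ∈ [0,1). Then there exist positive constants C_L, C_r, C_B and c_1 (depending only on a, d, β, K, ν) such that for every f_0 ∈ H_d^β(K) and every sufficiently large M ∈ ℕ, there exists a DNN f ∈ F_{ρν}^{DNN}(⌈C_L log₂ M⌉, ⌈C_r M^d⌉, C_B) with sup_{x ∈ [−a,a]^d} |f(x) − f_0(x)| ≤ c_1 M^{−2β}. -/

import Mathlib

noncomputable section

/-- Leaky-ReLU activation. -/
def lrelu (ν x : ℝ) : ℝ := max x (ν * x)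

/-- A fully connected Leaky-ReLU network with input dimension `d` and hidden width `r`:
a first affine layer `ℝ^d → ℝ^r`, a list of inner affine layers `ℝ^r → ℝ^r`, and an
output affine layer `ℝ^r → ℝ`.  Each affine layer except the last is followed by the
componentwise Leaky-ReLU activation.  The number of hidden layers (the depth) is
`hid.length + 1`. -/
structure LNet (d r : ℕ) where
  W0 : Fin r → Fin d → ℝ
  b0 : Fin r → ℝ
  hid : List ((Fin r → Fin r → ℝ) × (Fin r → ℝ))
  Wout : Fin r → ℝ
  bout : ℝ

/-- Evaluation of a Leaky-ReLU network. -/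
def LNet.eval (ν : ℝ) {d r : ℕ} (net : LNet d r) (x : Fin d → ℝ) : ℝ :=
  let h := net.hid.foldl
    (fun (h : Fin r → ℝ) p => fun i => lrelu ν ((∑ j, p.1 i j * h j) + p.2 i))
    (fun i => lrelu ν ((∑ j, net.W0 i j * x j) + net.b0 i))
  (∑ i, net.Wout i * h i) + net.bout

/-- All weights and biases of the network are bounded by `B` in absolute value. -/
def LNet.bounded {d r : ℕ} (net : LNet d r) (B : ℝ) : Prop :=
  (∀ i j, |net.W0 i j| ≤ B) ∧ (∀ i, |net.b0 i| ≤ B) ∧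
  (∀ p ∈ net.hid, (∀ i j, |p.1 i j| ≤ B) ∧ (∀ i, |p.2 i| ≤ B)) ∧
  (∀ i, |net.Wout i| ≤ B) ∧ |net.bout| ≤ B

/-- Membership in the class `F_{ρν}^{DNN}(L, r, B)` of Leaky-ReLU networks with
architecture `(L, (d, r, …, r, 1))` and all parameters bounded by `B`. -/
def memDNN (ν : ℝ) (d L r : ℕ) (B : ℝ) (f : (Fin d → ℝ) → ℝ) : Prop :=
  ∃ net : LNet d r, net.hid.length + 1 = L ∧ net.bounded B ∧ ∀ x, f x = net.eval ν x

/-- The cube `[−a,a]^d`. -/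
def cube (a : ℝ) (d : ℕ) : Set (Fin d → ℝ) := {x | ∀ i, x i ∈ Set.Icc (-a) a}

/-- Partial derivative of `f : ℝ^d → ℝ` in coordinate `i`. -/
def pder {d : ℕ} (i : Fin d) (f : (Fin d → ℝ) → ℝ) : (Fin d → ℝ) → ℝ :=
  fun x => fderiv ℝ f x (Pi.single i 1)

/-- Multi-index partial derivative `∂^α f = ∂_1^{α 1} ⋯ ∂_d^{α d} f`. -/
def pderm {d : ℕ} (α : Fin d → ℕ) (f : (Fin d → ℝ) → ℝ) : (Fin d → ℝ) → ℝ :=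
  (List.finRange d).foldr (fun i g => (pder i)^[α i] g) f

/-- Membership in the Hölder ball `H_d^β(K)` on `[−a,a]^d`: `f` is `⌊β⌋`-times
continuously differentiable and there are bounds `S α` on `|∂^α f|` over the cube for all
multi-indices with `|α|₁ < β`, and Hölder constants `H α` for `∂^α f` (with exponent
`β − ⌊β⌋`, with respect to the sup-norm) for all multi-indices with `|α|₁ = ⌊β⌋`, whose
total sum is at most `K`. -/
def memHolder (a : ℝ) (d : ℕ) (β K : ℝ) (f : (Fin d → ℝ) → ℝ) : Prop :=
  ContDiff ℝ (⌊β⌋₊ : ℕ∞) f ∧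
  ∃ S H : (Fin d → Fin (⌊β⌋₊ + 1)) → ℝ,
    (∀ α : Fin d → Fin (⌊β⌋₊ + 1), ((∑ i, (α i : ℕ) : ℕ) : ℝ) < β →
      ∀ x ∈ cube a d, |pderm (fun i => (α i : ℕ)) f x| ≤ S α) ∧
    (∀ α : Fin d → Fin (⌊β⌋₊ + 1), (∑ i, (α i : ℕ)) = ⌊β⌋₊ →
      ∀ x₁ ∈ cube a d, ∀ x₂ ∈ cube a d, x₁ ≠ x₂ →
        |pderm (fun i => (α i : ℕ)) f x₁ - pderm (fun i => (α i : ℕ)) f x₂| ≤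
          H α * ‖x₁ - x₂‖ ^ (β - (⌊β⌋₊ : ℝ))) ∧
    (∑ α ∈ Finset.univ.filter
        (fun α : Fin d → Fin (⌊β⌋₊ + 1) => ((∑ i, (α i : ℕ) : ℕ) : ℝ) < β), S α) +
      (∑ α ∈ Finset.univ.filter
        (fun α : Fin d → Fin (⌊β⌋₊ + 1) => (∑ i, (α i : ℕ)) = ⌊β⌋₊), H α) ≤ K

/-!
Cut the cube, rescaled to `[0, 1/2]^d`, into `M^{2d}` cells of side `M⁻²`, each addressed by two
base-`M` digits per coordinate, and replace `f₀` on each cell by its Taylor polynomial at a point of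
the cell; the error is of order `M^{-2β}`. Steep ramps extract the digits, and the coefficients are
read from a table whose `M^d` rows and `M^d` columns are the first and the second digits: selecting
a row is a linear operation on the one-hot code of the first digits, so that width of order `M^d`
suffices although the table has `M^{2d}` entries. The polynomial is evaluated by approximate
multiplication in depth of order `log M`.

A ramp returns a wrong digit only in a short interval below the end of a cell. Of three slightly
shifted grids at most one is wrong in a given coordinate, and taking medians of three, coordinate by
coordinate, over all `3^d` combinations of shifts discards the wrong values.

Everything is computed with ReLU neurons; two Leaky-ReLU neurons simulate one of these, since
`max y 0` and `y` are combinations of `ρ_ν(y)` and `ρ_ν(-y)` as soon as `|ν| ≠ 1`.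
-/

namespace DNN

/-! ### Network calculus -/

/-- `g` is an affine combination of the functions `G i`, with weights and bias at most `B` in
absolute value: one row of an affine layer. -/
def IsAffineComb {X ι : Type*} [Fintype ι] (B : ℝ) (G : ι → X → ℝ) (g : X → ℝ) : Prop :=
  ∃ (w : ι → ℝ) (b : ℝ), (∀ i, |w i| ≤ B) ∧ |b| ≤ B ∧ ∀ x, g x = ∑ i, w i * G i x + b

section AffineComb

variable {X ι κ : Type*} [Fintype ι] {B B' : ℝ} {G : ι → X → ℝ} {g g' : X → ℝ}

lemma IsAffineComb.mono (h : IsAffineComb B G g) (hB : B ≤ B') : IsAffineComb B' G g := by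
  obtain ⟨w, b, hw, hb, h⟩ := h
  exact ⟨w, b, fun i => (hw i).trans hB, hb.trans hB, h⟩

lemma isAffineComb_const (G : ι → X → ℝ) (c : ℝ) : IsAffineComb |c| G fun _ => c :=
  ⟨0, c, by simp, le_rfl, by simp⟩

lemma isAffineComb_sum_mul (hB : 0 ≤ B) {w : ι → ℝ} (hw : ∀ i, |w i| ≤ B) :
    IsAffineComb B G fun x => ∑ i, w i * G i x :=
  ⟨w, 0, hw, by simpa, by simp⟩

lemma isAffineComb_apply (G : ι → X → ℝ) (i : ι) : IsAffineComb 1 G (G i) := by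
  classical
  have hw : ∀ j, |(Pi.single i 1 : ι → ℝ) j| ≤ 1 := fun j => by
    rw [Pi.single_apply]; split_ifs <;> simp
  simpa [Pi.single_apply] using isAffineComb_sum_mul (G := G) zero_le_one hw

lemma IsAffineComb.add (h : IsAffineComb B G g) (h' : IsAffineComb B' G g') :
    IsAffineComb (B + B') G fun x => g x + g' x := by
  obtain ⟨w, b, hw, hb, h⟩ := h
  obtain ⟨w', b', hw', hb', h'⟩ := h'
  refine ⟨w + w', b + b', fun i => (abs_add_le _ _).trans (add_le_add (hw i) (hw' i)),
    (abs_add_le _ _).trans (add_le_add hb hb'), fun x => ?_⟩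
  simp only [h, h', Pi.add_apply, add_mul, Finset.sum_add_distrib]
  ring

lemma IsAffineComb.const_mul (c : ℝ) (h : IsAffineComb B G g) :
    IsAffineComb (|c| * B) G fun x => c * g x := by
  obtain ⟨w, b, hw, hb, h⟩ := h
  refine ⟨fun i => c * w i, c * b, fun i => ?_, ?_, fun x => ?_⟩
  · rw [abs_mul]; gcongr; exact hw i
  · rw [abs_mul]; gcongr
  · simp only [h, mul_add, Finset.mul_sum, mul_assoc]

lemma IsAffineComb.neg (h : IsAffineComb B G g) : IsAffineComb B G fun x => -g x := by
  simpa using h.const_mul (-1)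

lemma IsAffineComb.sub (h : IsAffineComb B G g) (h' : IsAffineComb B' G g') :
    IsAffineComb (B + B') G fun x => g x - g' x := by
  simpa only [sub_eq_add_neg] using h.add h'.neg

lemma IsAffineComb.comap [Fintype κ] {φ : κ → ι} (hφ : Function.Injective φ)
    (h : IsAffineComb B (fun k => G (φ k)) g) : IsAffineComb B G g := by
  classical
  obtain ⟨w, b, hw, hb, h⟩ := h
  refine ⟨Function.extend φ w 0, b, fun i => ?_, hb, fun x => ?_⟩
  · by_cases hi : ∃ k, φ k = i
    · obtain ⟨k, rfl⟩ := hi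
      simpa only [hφ.extend_apply] using hw k
    · simpa only [Function.extend_apply' _ _ _ hi, Pi.zero_apply, abs_zero] using
        (abs_nonneg b).trans hb
  · rw [h, add_left_inj]
    refine Fintype.sum_of_injective φ hφ _ _ (fun i hi => ?_) fun k => by rw [hφ.extend_apply]
    rw [Function.extend_apply' _ _ _ hi, Pi.zero_apply, zero_mul]

end AffineComb

/-- The registers `G` together with their positive parts. -/
def withReLU {X ι : Type*} (G : ι → X → ℝ) : ι ⊕ ι → X → ℝ :=
  Sum.elim G fun i x => max (G i x) 0

/-- `g` is a bounded affine combination of the registers `G` and of their positive parts: the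
preactivation of one neuron reading the layer `G`. -/
abbrev IsNeuron {X ι : Type*} [Fintype ι] (B : ℝ) (G : ι → X → ℝ) (g : X → ℝ) : Prop :=
  IsAffineComb B (withReLU G) g

section Neuron

variable {X ι κ : Type*} [Fintype ι] {B : ℝ} {g : X → ℝ}

lemma isNeuron_reg (G : ι → X → ℝ) (i : ι) : IsNeuron 1 G (G i) :=
  isAffineComb_apply (withReLU G) (Sum.inl i)

lemma isNeuron_relu (G : ι → X → ℝ) (i : ι) : IsNeuron 1 G fun x => max (G i x) 0 :=
  isAffineComb_apply (withReLU G) (Sum.inr i)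

lemma isNeuron_sum_reg {G : ι → X → ℝ} (hB : 0 ≤ B) {w : ι → ℝ} (hw : ∀ i, |w i| ≤ B) :
    IsNeuron B G fun x => ∑ i, w i * G i x :=
  IsAffineComb.comap (φ := Sum.inl) Sum.inl_injective (isAffineComb_sum_mul hB hw)

lemma isNeuron_sum_relu {G : ι → X → ℝ} (hB : 0 ≤ B) {w : ι → ℝ} (hw : ∀ i, |w i| ≤ B) :
    IsNeuron B G fun x => ∑ i, w i * max (G i x) 0 :=
  IsAffineComb.comap (φ := Sum.inr) Sum.inr_injective (isAffineComb_sum_mul hB hw)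

lemma isNeuron_abs (G : ι → X → ℝ) (i : ι) : IsNeuron 3 G fun x => |G i x| := by
  have h := ((isNeuron_relu G i).const_mul 2).sub (isNeuron_reg G i)
  have habs : (fun x => |G i x|) = fun x => 2 * max (G i x) 0 - G i x := by
    funext x
    rcases le_total 0 (G i x) with hx | hx
    · rw [abs_of_nonneg hx, max_eq_left hx]; ring
    · rw [abs_of_nonpos hx, max_eq_right hx]; ring
  rw [habs]
  exact h.mono (by norm_num)

lemma IsNeuron.comap [Fintype κ] {G : ι → X → ℝ} {φ : κ → ι} (hφ : Function.Injective φ)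
    (h : IsNeuron B (fun k => G (φ k)) g) : IsNeuron B G g := by
  refine IsAffineComb.comap (φ := Sum.map φ φ) (hφ.sumMap hφ) ?_
  convert h using 1
  funext k
  rcases k with k | k <;> rfl

end Neuron

/-- The registers `T` are computed from the registers `G` by `L` layers of neurons with weights
and biases at most `B`, each reading at most `m` registers. -/
def Computes {X ι : Type*} (B : ℝ) (m : ℕ) (G : ι → X → ℝ) :
    ℕ → ∀ {κ : Type}, (κ → X → ℝ) → Prop
  | 0, κ, T => ∃ φ : κ → ι, ∀ k, T k = G (φ k)
  | L + 1, _, T => ∃ (τ : Type) (_ : Fintype τ) (H : τ → X → ℝ),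
      Fintype.card τ ≤ m ∧ Computes B m G L H ∧ ∀ k, IsNeuron B H (T k)

namespace Computes

variable {X ι : Type*} {κ τ : Type} {B B' : ℝ} {m m' L L' : ℕ} {G : ι → X → ℝ}
  {T : κ → X → ℝ}

lemma mono (h : Computes B m G L T) (hB : B ≤ B') (hm : m ≤ m') : Computes B' m' G L T := by
  induction L generalizing κ T with
  | zero => exact h
  | succ L ih =>
    obtain ⟨τ, _, H, hc, hH, hT⟩ := h
    exact ⟨τ, _, H, hc.trans hm, ih hH, fun k => (hT k).mono hB⟩

lemma reindex (h : Computes B m G L T) (φ : τ → κ) : Computes B m G L fun t => T (φ t) := by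
  cases L with
  | zero =>
    obtain ⟨ψ, h⟩ := h
    exact ⟨fun t => ψ (φ t), fun t => h _⟩
  | succ L =>
    obtain ⟨τ, _, H, hc, hH, hT⟩ := h
    exact ⟨τ, _, H, hc, hH, fun t => hT _⟩

lemma refl {ι : Type} (G : ι → X → ℝ) : Computes B m G 0 G := ⟨id, fun _ => rfl⟩

lemma trans {H : κ → X → ℝ} {T : τ → X → ℝ} (h : Computes B m G L H)
    (h' : Computes B m H L' T) : Computes B m G (L + L') T := by
  induction L' generalizing τ T with
  | zero =>
    obtain ⟨ψ, h'⟩ := h'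
    obtain rfl : T = fun t => H (ψ t) := funext h'
    exact h.reindex ψ
  | succ L' ih =>
    obtain ⟨τ, _, H', hc, hH', hT⟩ := h'
    exact ⟨τ, _, H', hc, ih hH', hT⟩

lemma comap (φ : κ → ι) {T : τ → X → ℝ} (h : Computes B m (fun k => G (φ k)) L T) :
    Computes B m G L T := by
  have hsel : Computes B m G 0 fun k => G (φ k) := ⟨φ, fun _ => rfl⟩
  simpa using hsel.trans h

lemma succ [Fintype κ] {T' : τ → X → ℝ} (h : Computes B m G L T) (hc : Fintype.card κ ≤ m)
    (hT : ∀ t, IsNeuron B T (T' t)) : Computes B m G (L + 1) T' :=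
  ⟨κ, inferInstance, T, hc, h, hT⟩

lemma delay [Fintype κ] (h : Computes B m G L T) (hc : Fintype.card κ ≤ m) (hB : 1 ≤ B)
    (hL : L ≤ L') : Computes B m G L' T := by
  induction hL with
  | refl => exact h
  | step _ ih => exact ih.succ hc fun k => (isNeuron_reg T k).mono hB

lemma carry {ι : Type} {G : ι → X → ℝ} [Fintype κ] (φ : κ → ι) (hc : Fintype.card κ ≤ m)
    (hB : 1 ≤ B) : Computes B m G L fun k => G (φ k) :=
  ((refl G).reindex φ).delay hc hB (Nat.zero_le L)

lemma sigma {J : Type} [Fintype J] {κ : J → Type} {m : J → ℕ} {T : ∀ j, κ j → X → ℝ}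
    (h : ∀ j, Computes B (m j) G L (T j)) :
    Computes B (∑ j, m j) G L fun p : Σ j, κ j => T p.1 p.2 := by
  induction L generalizing κ T with
  | zero =>
    choose φ hφ using h
    exact ⟨fun p => φ p.1 p.2, fun p => hφ _ _⟩
  | succ L ih =>
    choose τ _ H hc hH hT using h
    refine ⟨Σ j, τ j, inferInstance, fun p => H p.1 p.2, ?_, ih hH, fun p => ?_⟩
    · rw [Fintype.card_sigma]
      exact Finset.sum_le_sum fun j _ => hc j
    · exact IsNeuron.comap (φ := Sigma.mk p.1) sigma_mk_injective (hT p.1 p.2)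

lemma sumElim {T' : τ → X → ℝ} (h : Computes B m G L T) (h' : Computes B m' G L T') :
    Computes B (m + m') G L (Sum.elim T T') := by
  induction L generalizing κ τ T T' with
  | zero =>
    obtain ⟨φ, hφ⟩ := h
    obtain ⟨φ', hφ'⟩ := h'
    exact ⟨Sum.elim φ φ', by rintro (k | k); exacts [hφ k, hφ' k]⟩
  | succ L ih =>
    obtain ⟨σ, _, H, hc, hH, hT⟩ := h
    obtain ⟨σ', _, H', hc', hH', hT'⟩ := h'
    refine ⟨σ ⊕ σ', inferInstance, Sum.elim H H', ?_, ih hH hH', ?_⟩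
    · rw [Fintype.card_sum]; exact Nat.add_le_add hc hc'
    · rintro (k | k)
      · exact IsNeuron.comap Sum.inl_injective (hT k)
      · exact IsNeuron.comap Sum.inr_injective (hT' k)

lemma pi {J : Type} [Fintype J] {T : J → X → ℝ}
    (h : ∀ j, Computes B m G L fun _ : Unit => T j) : Computes B (Fintype.card J * m) G L T := by
  have := (sigma h).reindex fun j : J => (⟨j, ()⟩ : Σ _ : J, Unit)
  simpa using this

end Computes

/-! ### Leaky-ReLU networks simulate ReLU neurons -/

lemma exists_relu_eq_lrelu {ν : ℝ} (hν : |ν| ≠ 1) :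
    ∃ p q : ℝ, ∀ y, max y 0 = p * lrelu ν y + q * lrelu ν (-y) := by
  have hν' : ν ^ 2 - 1 ≠ 0 := by
    rwa [sub_ne_zero, ← sq_abs, Ne, pow_eq_one_iff_of_nonneg (abs_nonneg ν) two_ne_zero]
  have hν'' : 1 - ν ^ 2 ≠ 0 := by rwa [← neg_ne_zero, neg_sub]
  unfold lrelu
  rcases le_total ν 1 with h1 | h1
  · refine ⟨1 / (1 - ν ^ 2), ν / (1 - ν ^ 2), fun y => ?_⟩
    rcases le_total 0 y with hy | hy
    · rw [max_eq_left hy, max_eq_left (by nlinarith), max_eq_right (by nlinarith)]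
      field_simp; ring
    · rw [max_eq_right hy, max_eq_right (by nlinarith), max_eq_left (by nlinarith)]
      field_simp; ring
  · refine ⟨ν / (ν ^ 2 - 1), 1 / (ν ^ 2 - 1), fun y => ?_⟩
    rcases le_total 0 y with hy | hy
    · rw [max_eq_left hy, max_eq_right (by nlinarith), max_eq_left (by nlinarith)]
      field_simp; ring
    · rw [max_eq_right hy, max_eq_left (by nlinarith), max_eq_right (by nlinarith)]
      field_simp; ring

/-- The output of the last hidden layer of a network. -/
def hiddenState (ν : ℝ) {d r : ℕ} (net : LNet d r) (i : Fin r) (x : Fin d → ℝ) : ℝ :=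
  net.hid.foldl (fun (h : Fin r → ℝ) p => fun i => lrelu ν ((∑ j, p.1 i j * h j) + p.2 i))
    (fun i => lrelu ν ((∑ j, net.W0 i j * x j) + net.b0 i)) i

section Simulation

variable {ν p q B C : ℝ} {X : Type*} {τ : Type*} [Fintype τ]

lemma eq_lrelu_sub_lrelu_neg (hpq : ∀ y, max y 0 = p * lrelu ν y + q * lrelu ν (-y)) (y : ℝ) :
    y = (p - q) * lrelu ν y + (q - p) * lrelu ν (-y) := by
  have hneg := hpq (-y)
  rw [neg_neg] at hneg
  linear_combination hpq y - hneg - max_zero_sub_max_neg_zero_eq_self y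

lemma IsNeuron.isAffineComb_lrelu (hpq : ∀ y, max y 0 = p * lrelu ν y + q * lrelu ν (-y))
    {T : τ → X → ℝ} {g : X → ℝ} (hg : IsNeuron B T g) :
    IsAffineComb ((1 + 2 * |p| + 2 * |q|) * B)
      (fun (i : τ ⊕ τ) x => lrelu ν (Sum.elim T (-T) i x)) g := by
  obtain ⟨w, b, hw, hb, hg⟩ := hg
  have hB : 0 ≤ B := (abs_nonneg b).trans hb
  have hp := abs_nonneg p
  have hq := abs_nonneg q
  have hcomb : ∀ i (s t : ℝ), |s| ≤ |p| + |q| → |t| ≤ |p| + |q| →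
      |w (.inl i) * s + w (.inr i) * t| ≤ (1 + 2 * |p| + 2 * |q|) * B := fun i s t hs ht =>
    calc |w (.inl i) * s + w (.inr i) * t| ≤ |w (.inl i)| * |s| + |w (.inr i)| * |t| := by
          simpa only [abs_mul] using abs_add_le (w (.inl i) * s) (w (.inr i) * t)
      _ ≤ B * (|p| + |q|) + B * (|p| + |q|) := by gcongr <;> apply hw
      _ ≤ (1 + 2 * |p| + 2 * |q|) * B := by linarith
  refine ⟨Sum.elim (fun i => w (.inl i) * (p - q) + w (.inr i) * p)
    (fun i => w (.inl i) * (q - p) + w (.inr i) * q), b, ?_, hb.trans ?_, fun x => ?_⟩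
  · rintro (i | i)
    · exact hcomb i _ _ (abs_sub p q) (by linarith)
    · exact hcomb i _ _ ((abs_sub q p).trans_eq (add_comm _ _)) (by linarith)
  · nlinarith
  · simp only [hg, withReLU, Fintype.sum_sum_type, Sum.elim_inl, Sum.elim_inr, Pi.neg_apply,
      ← Finset.sum_add_distrib]
    congr 1
    refine Finset.sum_congr rfl fun i _ => ?_
    linear_combination w (.inl i) * eq_lrelu_sub_lrelu_neg hpq (T i x) + w (.inr i) * hpq (T i x)

lemma exists_layer_of_isNeuron (hpq : ∀ y, max y 0 = p * lrelu ν y + q * lrelu ν (-y)) {m r n : ℕ}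
    (hτ : Fintype.card τ ≤ m) (hr : 2 * m ≤ r) (hC : 0 ≤ C) {h : Fin n → X → ℝ} {T : τ → X → ℝ}
    (hT : ∀ t, IsAffineComb C h (T t)) :
    ∃ (W : Fin r → Fin n → ℝ) (b : Fin r → ℝ), (∀ i j, |W i j| ≤ C) ∧ (∀ i, |b i| ≤ C) ∧
      ∀ g, IsNeuron B T g → IsAffineComb ((1 + 2 * |p| + 2 * |q|) * B)
        (fun i x => lrelu ν (∑ j, W i j * h j x + b i)) g := by
  obtain ⟨e⟩ : Nonempty (τ ⊕ τ ↪ Fin r) := Function.Embedding.nonempty_of_card_le (by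
    simp only [Fintype.card_sum, Fintype.card_fin]; omega)
  let S : Fin r → X → ℝ := Function.extend e (Sum.elim T (-T)) 0
  have hS : ∀ i, IsAffineComb C h (S i) := fun i => by
    by_cases hi : ∃ k, e k = i
    · obtain ⟨k | k, rfl⟩ := hi
      · simpa only [S, e.injective.extend_apply] using! hT k
      · simpa only [S, e.injective.extend_apply] using! (hT k).neg
    · simp only [S, Function.extend_apply' _ _ _ hi]
      exact (isAffineComb_const h 0).mono (by simpa using hC)
  choose W b hW hb hWb using hS
  refine ⟨W, b, hW, hb, fun g hg => IsAffineComb.comap e.injective ?_⟩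
  convert hg.isAffineComb_lrelu hpq using 4 with k x
  rw [← hWb, show S (e k) = _ from e.injective.extend_apply _ _ _]

end Simulation

section Realization

variable {ν p q B : ℝ} {d m r L : ℕ} {κ : Type}

lemma Computes.exists_hiddenState (hpq : ∀ y, max y 0 = p * lrelu ν y + q * lrelu ν (-y))
    (hB : 1 ≤ B) (hr : 2 * m ≤ r) {T : κ → (Fin d → ℝ) → ℝ}
    (h : Computes B m (fun (i : Fin d) (x : Fin d → ℝ) => x i) (L + 1) T) :
    ∃ net : LNet d r, net.hid.length = L ∧ net.bounded ((1 + 2 * |p| + 2 * |q|) * B) ∧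
      ∀ k, IsAffineComb ((1 + 2 * |p| + 2 * |q|) * B) (hiddenState ν net) (T k) := by
  have hC : 1 ≤ (1 + 2 * |p| + 2 * |q|) * B := by nlinarith [abs_nonneg p, abs_nonneg q]
  induction L generalizing κ T with
  | zero =>
    obtain ⟨τ, _, H, hc, ⟨φ, hφ⟩, hT⟩ := h
    obtain ⟨W, b, hW, hb, hWb⟩ := exists_layer_of_isNeuron hpq hc hr (zero_le_one.trans hC)
      (h := fun (j : Fin d) (x : Fin d → ℝ) => x j) (T := H)
      fun t => by rw [hφ]; exact (isAffineComb_apply _ (φ t)).mono hC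
    exact ⟨⟨W, b, [], 0, 0⟩, rfl, ⟨hW, hb, by simp, fun _ => by simpa using zero_le_one.trans hC,
      by simpa using zero_le_one.trans hC⟩, fun k => hWb _ (hT k)⟩
  | succ L ih =>
    obtain ⟨τ, _, H, hc, hH, hT⟩ := h
    obtain ⟨net, hlen, ⟨hW0, hb0, hhid, hWout, hbout⟩, hnet⟩ := ih hH
    obtain ⟨W, b, hW, hb, hWb⟩ :=
      exists_layer_of_isNeuron hpq hc hr (zero_le_one.trans hC) hnet
    refine ⟨{ net with hid := net.hid ++ [(W, b)] }, by simp [hlen], ⟨hW0, hb0, ?_, hWout, hbout⟩,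
      fun k => ?_⟩
    · simp only [List.forall_mem_append, List.forall_mem_singleton]
      exact ⟨hhid, hW, hb⟩
    · convert hWb _ (hT k) using 3 with i x
      simp only [hiddenState, List.foldl_append, List.foldl_cons, List.foldl_nil]

lemma exists_memDNN_of_computes (hν : |ν| ≠ 1) :
    ∃ C : ℝ, 0 < C ∧ ∀ {B : ℝ} {d m r L : ℕ} {f : (Fin d → ℝ) → ℝ}, 1 ≤ B → 2 * m ≤ r → 1 ≤ L →
      Computes B m (fun (i : Fin d) (x : Fin d → ℝ) => x i) L (fun _ : Unit => f) →
        memDNN ν d L r (C * B) f := by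
  obtain ⟨p, q, hpq⟩ := exists_relu_eq_lrelu hν
  refine ⟨1 + 2 * |p| + 2 * |q|, by positivity, fun {B d m r L f} hB hr hL h => ?_⟩
  obtain ⟨L, rfl⟩ := Nat.exists_eq_add_of_le' hL
  obtain ⟨net, hlen, ⟨hW0, hb0, hhid, -, -⟩, hnet⟩ := h.exists_hiddenState hpq hB hr
  obtain ⟨w, b, hw, hb, hf⟩ := hnet ()
  exact ⟨{ net with Wout := w, bout := b }, by simp [hlen], ⟨hW0, hb0, hhid, hw, hb⟩, hf⟩

end Realization

/-! ### Approximate squares, products and monomials -/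

/-- The map `t ↦ |2t - 1|` of `[0, 1]`, whose iterates are sawtooth functions. -/
def fold (t : ℝ) : ℝ := |2 * t - 1|

/-- The approximation of `t ^ 2` obtained by iterating the identity
`t ^ 2 = (t - 1/4) + fold t ^ 2 / 4` and dropping the remainder after `m` steps. -/
def sqApprox (m : ℕ) (t : ℝ) : ℝ := ∑ k ∈ Finset.range m, (fold^[k] t - 1 / 4) * (1 / 4) ^ k

lemma fold_mem_unitInterval {t : ℝ} (ht : t ∈ Set.Icc (0 : ℝ) 1) : fold t ∈ Set.Icc (0 : ℝ) 1 :=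
  ⟨abs_nonneg _, abs_le.2 ⟨by linarith [ht.1], by linarith [ht.2]⟩⟩

lemma sq_sub_sqApprox (m : ℕ) (t : ℝ) :
    t ^ 2 - sqApprox m t = (fold^[m] t) ^ 2 * (1 / 4) ^ m := by
  induction m with
  | zero => simp [sqApprox]
  | succ m ih =>
    rw [sqApprox, Finset.sum_range_succ, ← sqApprox, Function.iterate_succ_apply', fold, sq_abs,
      pow_succ]
    linear_combination ih

lemma sq_sub_sqApprox_mem_Icc (m : ℕ) {t : ℝ} (ht : t ∈ Set.Icc (0 : ℝ) 1) :
    t ^ 2 - sqApprox m t ∈ Set.Icc 0 ((1 / 4 : ℝ) ^ m) := by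
  obtain ⟨h0, h1⟩ : fold^[m] t ∈ Set.Icc (0 : ℝ) 1 :=
    Set.MapsTo.iterate (fun _ => fold_mem_unitInterval) m ht
  rw [sq_sub_sqApprox]
  exact ⟨by positivity, mul_le_of_le_one_left (by positivity) (pow_le_one₀ h0 h1)⟩

/-- The approximation of `p * q`, for `|p|, |q| ≤ A`, obtained from `sqApprox` by polarization. -/
def mulApprox (A : ℝ) (m : ℕ) (p q : ℝ) : ℝ :=
  A ^ 2 * (sqApprox m |(p + q) / (2 * A)| - sqApprox m |(p - q) / (2 * A)|)

lemma abs_mulApprox_sub_le {A p q : ℝ} (hA : 0 < A) (m : ℕ) (hp : |p| ≤ A) (hq : |q| ≤ A) :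
    |mulApprox A m p q - p * q| ≤ A ^ 2 * (1 / 4) ^ m := by
  have hunit : ∀ y : ℝ, |y| ≤ 2 * A → |y / (2 * A)| ∈ Set.Icc (0 : ℝ) 1 := fun y hy => by
    rw [abs_div, abs_of_pos (by positivity : 0 < 2 * A)]
    exact ⟨by positivity, div_le_one_of_le₀ hy (by positivity)⟩
  obtain ⟨hs, hs'⟩ := sq_sub_sqApprox_mem_Icc m
    (hunit (p + q) ((abs_add_le p q).trans (by linarith)))
  obtain ⟨hd, hd'⟩ := sq_sub_sqApprox_mem_Icc m
    (hunit (p - q) ((abs_sub p q).trans (by linarith)))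
  have hpolar : p * q = A ^ 2 * (|(p + q) / (2 * A)| ^ 2 - |(p - q) / (2 * A)| ^ 2) := by
    rw [sq_abs, sq_abs]
    field_simp
    ring
  rw [hpolar, mulApprox, ← mul_sub, abs_mul, abs_of_nonneg (sq_nonneg A)]
  gcongr
  exact abs_le.2 ⟨by linarith, by linarith⟩

/-- The approximation of `p * ∏ i ∈ l, z i` by successive multiplications with `mulApprox`. -/
def monomialApprox {ι : Type*} (A : ℝ) (m : ℕ) (p : ℝ) (z : ι → ℝ) (l : List ι) : ℝ :=
  l.foldl (fun h i => mulApprox A m h (z i)) p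

lemma abs_prod_map_le_pow {ι : Type*} {c : ℝ} {z : ι → ℝ} (hz : ∀ i, |z i| ≤ c) (l : List ι) :
    |(l.map z).prod| ≤ c ^ l.length := by
  induction l with
  | nil => simp
  | cons i l ih =>
    rw [List.map_cons, List.prod_cons, abs_mul, List.length_cons, pow_succ']
    exact mul_le_mul (hz i) ih (abs_nonneg _) ((abs_nonneg _).trans (hz i))

lemma abs_monomialApprox_sub_le {ι : Type*} {A : ℝ} (hA : 1 ≤ A) (m : ℕ) {z : ι → ℝ}
    (hz : ∀ i, |z i| ≤ 1) (l : List ι) {p : ℝ}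
    (hp : |p| + l.length * (A ^ 2 * (1 / 4) ^ m) ≤ A) :
    |monomialApprox A m p z l - p * (l.map z).prod| ≤ l.length * (A ^ 2 * (1 / 4) ^ m) := by
  induction l generalizing p with
  | nil => simp [monomialApprox]
  | cons i l ih =>
    set ε := A ^ 2 * (1 / 4 : ℝ) ^ m
    have hε : 0 ≤ ε := by positivity
    simp only [List.length_cons, Nat.cast_add, Nat.cast_one] at hp ⊢
    have hlε : 0 ≤ l.length * ε := by positivity
    have hmul : |mulApprox A m p (z i) - p * z i| ≤ ε :=
      abs_mulApprox_sub_le (by linarith) m (by linarith) ((hz i).trans hA)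
    have hpz : |p * z i| ≤ |p| := by
      rw [abs_mul]; exact mul_le_of_le_one_right (abs_nonneg p) (hz i)
    have htail := ih (p := mulApprox A m p (z i))
      (by linarith [abs_sub_abs_le_abs_sub (mulApprox A m p (z i)) (p * z i)])
    have hprod : |(l.map z).prod| ≤ 1 := by simpa using abs_prod_map_le_pow hz l
    calc |monomialApprox A m p z (i :: l) - p * ((i :: l).map z).prod|
        = |(monomialApprox A m (mulApprox A m p (z i)) z l -
            mulApprox A m p (z i) * (l.map z).prod) +
            (mulApprox A m p (z i) - p * z i) * (l.map z).prod| := by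
          rw [List.map_cons, List.prod_cons, monomialApprox, List.foldl_cons, ← monomialApprox]
          congr 1
          ring
      _ ≤ l.length * ε + ε * 1 := by
          refine (abs_add_le _ _).trans (add_le_add htail ?_)
          rw [abs_mul]
          gcongr
      _ = (l.length + 1) * ε := by ring

section Computes

variable {X : Type*} {ι : Type} {A B : ℝ}

lemma computes_sqApprox (hB : 8 ≤ B) (m : ℕ) (G : ι → X → ℝ) (i : ι) :
    Computes B 2 G (m + 1) fun _ : Unit => fun x => sqApprox m (G i x) := by
  suffices h : Computes B 2 G (m + 1)
      ![fun x => 2 * fold^[m] (G i x) - 1, fun x => sqApprox m (G i x)] from h.reindex fun _ => 1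
  induction m with
  | zero =>
    refine ((Computes.refl G).reindex fun _ : Unit => i).succ (by simp)
      (Fin.forall_fin_two.2 ⟨?_, ?_⟩)
    · exact (((isNeuron_reg _ ()).const_mul 2).sub (isAffineComb_const _ 1)).mono
        (by norm_num; linarith)
    · exact (isAffineComb_const _ 0).mono (by norm_num [sqApprox]; linarith)
  | succ m ih =>
    set T : Fin 2 → X → ℝ := ![fun x => 2 * fold^[m] (G i x) - 1, fun x => sqApprox m (G i x)]
    refine ih.succ (by simp) (Fin.forall_fin_two.2 ⟨?_, ?_⟩)
    · have h := ((isNeuron_abs T 0).const_mul 2).sub (isAffineComb_const _ 1)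
      simp only [Function.iterate_succ_apply', fold]
      exact h.mono (by norm_num; linarith)
    · have h := (isNeuron_reg T 1).add
        ((((isNeuron_reg T 0).const_mul (1 / 2)).add (isAffineComb_const _ (1 / 4))).const_mul
          ((1 / 4) ^ m))
      have hacc : (fun x => sqApprox (m + 1) (G i x)) =
          fun x => T 1 x + (1 / 4) ^ m * (1 / 2 * T 0 x + 1 / 4) := by
        funext x
        rw [sqApprox, Finset.sum_range_succ, ← sqApprox]
        simp only [T, Matrix.cons_val_zero, Matrix.cons_val_one]
        ring
      have hpow : |(1 / 4 : ℝ) ^ m| ≤ 1 := by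
        rw [abs_of_pos (by positivity)]
        exact pow_le_one₀ (by norm_num) (by norm_num)
      change IsNeuron B T fun x => sqApprox (m + 1) (G i x)
      rw [hacc]
      exact h.mono (by norm_num at hpow ⊢; linarith)

lemma computes_mulApprox (hA : 1 ≤ A) (hB : 8 ≤ B) (hAB : 2 * A ^ 2 ≤ B) (m : ℕ)
    (G : ι → X → ℝ) (i j : ι) :
    Computes B 4 G (m + 4) fun _ : Unit => fun x => mulApprox A m (G i x) (G j x) := by
  have hinv : |1 / (2 * A)| * (1 + 1) ≤ B := by
    rw [abs_of_pos (by positivity), one_div_mul_eq_div, div_le_iff₀ (by positivity)]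
    nlinarith
  have hscale : Computes B 4 G 1 ![fun x => 1 / (2 * A) * (G i x + G j x),
      fun x => 1 / (2 * A) * (G i x - G j x)] :=
    ((Computes.refl G).reindex ![i, j]).succ (by simp) (Fin.forall_fin_two.2
      ⟨(((isNeuron_reg _ 0).add (isNeuron_reg _ 1)).const_mul _).mono hinv,
        (((isNeuron_reg _ 0).sub (isNeuron_reg _ 1)).const_mul _).mono hinv⟩)
  simp only [one_div_mul_eq_div] at hscale
  have habs : Computes B 4 G 2
      ![fun x => |(G i x + G j x) / (2 * A)|, fun x => |(G i x - G j x) / (2 * A)|] :=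
    hscale.succ (by simp) (Fin.forall_fin_two.2
      ⟨(isNeuron_abs _ 0).mono (by linarith), (isNeuron_abs _ 1).mono (by linarith)⟩)
  have hsq := habs.trans ((computes_sqApprox hB m _ 0).sumElim (computes_sqApprox hB m _ 1))
  rw [show m + 4 = 2 + (m + 1) + 1 by ring]
  exact hsq.succ (by simp) fun _ => (((isNeuron_reg _ (Sum.inl ())).sub
    (isNeuron_reg _ (Sum.inr ()))).const_mul (A ^ 2)).mono (by
      rw [abs_of_nonneg (sq_nonneg A)]; linarith)

lemma computes_monomialApprox {d : ℕ} (hA : 1 ≤ A) (hB : 8 ≤ B) (hAB : 2 * A ^ 2 ≤ B) (m : ℕ)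
    (p : X → ℝ) (z : Fin d → X → ℝ) (l : List (Fin d)) :
    Computes B (4 + d) (Sum.elim (fun _ : Unit => p) z) (l.length * (m + 4))
      (Sum.elim (fun _ : Unit => fun x => monomialApprox A m (p x) (fun i => z i x) l) z) := by
  induction l generalizing p with
  | nil => simpa [monomialApprox] using Computes.refl (Sum.elim (fun _ : Unit => p) z)
  | cons i l ih =>
    have hmul := computes_mulApprox hA hB hAB m (Sum.elim (fun _ : Unit => p) z)
      (Sum.inl ()) (Sum.inr i)
    have hz : Computes B d (Sum.elim (fun _ : Unit => p) z) (m + 4) z :=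
      .carry Sum.inr (by simp) (by linarith)
    rw [List.length_cons, Nat.succ_mul, Nat.add_comm (l.length * (m + 4))]
    exact (hmul.sumElim hz).trans (ih _)

end Computes

/-! ### Medians -/

/-- The median of three numbers. -/
def median3 (v : Fin 3 → ℝ) : ℝ := max (min (v 0) (v 1)) (min (max (v 0) (v 1)) (v 2))

lemma median3_mem_Icc {v : Fin 3 → ℝ} {l u : ℝ} {S : Set (Fin 3)} (hS : S.Nontrivial)
    (hv : ∀ s ∈ S, v s ∈ Set.Icc l u) : median3 v ∈ Set.Icc l u := by
  obtain ⟨s, hs, t, ht, hst⟩ := hS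
  have hs' := hv s hs
  have ht' := hv t ht
  simp only [median3, Set.mem_Icc, le_max_iff, le_min_iff, max_le_iff, min_le_iff] at *
  fin_cases s <;> fin_cases t <;> simp_all

/-- The medians over all `k` coordinates of `v`, taken successively from the first to the last. -/
def iterMedian : ∀ k, ((Fin k → Fin 3) → ℝ) → ℝ
  | 0, v => v Fin.elim0
  | k + 1, v => iterMedian k fun s => median3 fun i => v (Fin.cons i s)

lemma iterMedian_mem_Icc {l u : ℝ} {k : ℕ} {v : (Fin k → Fin 3) → ℝ} {S : Fin k → Set (Fin 3)}
    (hS : ∀ i, (S i).Nontrivial) (hv : ∀ s, (∀ i, s i ∈ S i) → v s ∈ Set.Icc l u) :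
    iterMedian k v ∈ Set.Icc l u := by
  induction k with
  | zero => exact hv _ fun i => i.elim0
  | succ k ih =>
    refine ih (fun i => hS i.succ) fun s hs => median3_mem_Icc (hS 0) fun i hi => hv _ ?_
    exact Fin.cases hi hs

section Computes

variable {X : Type*} {ι : Type} {B : ℝ}

lemma computes_max (hB : 2 ≤ B) (G : ι → X → ℝ) (i j : ι) :
    Computes B 2 G 2 fun _ : Unit => fun x => max (G i x) (G j x) := by
  have hdiff : Computes B 2 G 1 ![G i, fun x => G j x - G i x] :=
    ((Computes.refl G).reindex ![i, j]).succ (by simp) (Fin.forall_fin_two.2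
      ⟨(isNeuron_reg _ 0).mono (by linarith),
        ((isNeuron_reg _ 1).sub (isNeuron_reg _ 0)).mono (by linarith)⟩)
  have hmax : ∀ x, max (G i x) (G j x) = G i x + max (G j x - G i x) 0 := fun x => by
    rw [← max_add_add_left, add_sub_cancel, add_zero, max_comm]
  simp only [hmax]
  exact hdiff.succ (by simp) fun _ =>
    ((isNeuron_reg _ 0).add (isNeuron_relu _ 1)).mono (by linarith)

lemma computes_min (hB : 2 ≤ B) (G : ι → X → ℝ) (i j : ι) :
    Computes B 2 G 2 fun _ : Unit => fun x => min (G i x) (G j x) := by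
  have hdiff : Computes B 2 G 1 ![G i, fun x => G i x - G j x] :=
    ((Computes.refl G).reindex ![i, j]).succ (by simp) (Fin.forall_fin_two.2
      ⟨(isNeuron_reg _ 0).mono (by linarith),
        ((isNeuron_reg _ 0).sub (isNeuron_reg _ 1)).mono (by linarith)⟩)
  have hmin : ∀ x, min (G i x) (G j x) = G i x - max (G i x - G j x) 0 := fun x => by
    rw [← min_sub_sub_left, sub_sub_cancel, sub_zero, min_comm]
  simp only [hmin]
  exact hdiff.succ (by simp) fun _ =>
    ((isNeuron_reg _ 0).sub (isNeuron_relu _ 1)).mono (by linarith)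

lemma computes_median3 (hB : 2 ≤ B) (G : ι → X → ℝ) (i : Fin 3 → ι) :
    Computes B 5 G 6 fun _ : Unit => fun x => median3 fun s => G (i s) x := by
  have hcarry : ∀ {ι : Type} (G : ι → X → ℝ) (i : ι),
      Computes B 1 G 2 fun _ : Unit => G i := fun G i => .carry (fun _ => i) le_rfl (by linarith)
  have h₁ := ((computes_min hB G (i 0) (i 1)).sumElim (computes_max hB G (i 0) (i 1))).sumElim
    (hcarry G (i 2))
  have h₂ := h₁.trans (((hcarry _ (Sum.inl (Sum.inl ()))).sumElim
    (computes_min hB _ (Sum.inl (Sum.inr ())) (Sum.inr ()))).mono le_rfl (by norm_num))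
  exact h₂.trans ((computes_max hB _ (Sum.inl ()) (Sum.inr ())).mono le_rfl (by norm_num))

lemma computes_iterMedian (hB : 2 ≤ B) (k : ℕ) (v : (Fin k → Fin 3) → X → ℝ) :
    Computes B (5 * 3 ^ k) v (6 * k) fun _ : Unit => fun x => iterMedian k fun s => v s x := by
  induction k with
  | zero => exact (Computes.refl v).reindex fun _ => Fin.elim0
  | succ k ih =>
    have hmed : Computes B (5 * 3 ^ k) v 6
        fun (s : Fin k → Fin 3) x => median3 fun i => v (Fin.cons i s) x :=
      (Computes.pi fun s => computes_median3 hB v fun i => Fin.cons i s).mono le_rfl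
        (by simp [mul_comm])
    have h := (hmed.trans (ih _)).mono (m' := 5 * 3 ^ (k + 1)) le_rfl (by rw [pow_succ]; omega)
    rwa [show 6 + 6 * k = 6 * (k + 1) by ring] at h

end Computes

/-! ### Digit extraction -/

/-- The steep ramp that rises from `0` at `c - 2⁻ⁿ` to `1` at `c`. -/
def ramp (n : ℕ) (c u : ℝ) : ℝ :=
  max (2 ^ n * (u - (c - (1 / 2) ^ n))) 0 - max (2 ^ n * (u - c)) 0

/-- The `l`-th indicator for cells of length `h`: it is `1` on `[lh, (l+1)h - 2⁻ⁿ]` and `0` outside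
`[lh - 2⁻ⁿ, (l+1)h]`. -/
def bump (n : ℕ) (h : ℝ) (l : ℕ) (u : ℝ) : ℝ := ramp n (l * h) u - ramp n ((l + 1) * h) u

lemma ramp_eq_one {n : ℕ} {c u : ℝ} (h : c ≤ u) : ramp n c u = 1 := by
  have hδ : (0 : ℝ) ≤ (1 / 2) ^ n := by positivity
  rw [ramp, max_eq_left (mul_nonneg (by positivity) (by linarith)),
    max_eq_left (mul_nonneg (by positivity) (by linarith)), ← mul_sub, sub_sub_sub_cancel_left,
    sub_sub_cancel, ← mul_pow]
  norm_num

lemma ramp_eq_zero {n : ℕ} {c u : ℝ} (h : u ≤ c - (1 / 2) ^ n) : ramp n c u = 0 := by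
  have hδ : (0 : ℝ) ≤ (1 / 2) ^ n := by positivity
  rw [ramp, max_eq_right (mul_nonpos_of_nonneg_of_nonpos (by positivity) (by linarith)),
    max_eq_right (mul_nonpos_of_nonneg_of_nonpos (by positivity) (by linarith)), sub_zero]

lemma bump_eq_ite {n i : ℕ} {h u : ℝ} (hh : 0 ≤ h)
    (hu : u ∈ Set.Icc (i * h) ((i + 1) * h - (1 / 2) ^ n)) (l : ℕ) :
    bump n h l u = if l = i then 1 else 0 := by
  have hone : ∀ k : ℕ, k ≤ i → ramp n (k * h) u = 1 := fun k hk =>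
    ramp_eq_one ((mul_le_mul_of_nonneg_right (Nat.cast_le.2 hk) hh).trans hu.1)
  have hzero : ∀ k : ℕ, i + 1 ≤ k → ramp n (k * h) u = 0 := fun k hk =>
    ramp_eq_zero (hu.2.trans (sub_le_sub_right
      (mul_le_mul_of_nonneg_right (by exact_mod_cast hk) hh) _))
  rw [bump, ← Nat.cast_add_one]
  rcases lt_trichotomy l i with hl | rfl | hl
  · rw [hone l hl.le, hone _ hl, if_neg hl.ne, sub_self]
  · rw [hone l le_rfl, hzero _ le_rfl, if_pos rfl, sub_zero]
  · rw [hzero l hl, hzero _ (by omega), if_neg hl.ne', sub_self]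

/-- The lower end of the cell of `[0, 1]` with base-`N` digits `I` and `J`. -/
def corner {N : ℕ} (I J : Fin N) : ℝ := I * (1 / N) + J * (1 / N ^ 2)

/-- `u` lies in the cell of length `N⁻²` with base-`N` digits `I` and `J`, at distance at least
`2⁻ⁿ` below its upper end. -/
def InCell (n : ℕ) {N : ℕ} (I J : Fin N) (u : ℝ) : Prop :=
  u ∈ Set.Icc (corner I J) (corner I J + 1 / N ^ 2 - (1 / 2) ^ n)

/-- What remains of `u` after subtracting its first base-`N` digit. -/
def remainder (n N : ℕ) (u : ℝ) : ℝ := u - ∑ l : Fin N, l * (1 / N) * bump n (1 / N) l u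

/-- The one-hot encodings of the first two base-`N` digits of `u`. -/
def digits (n N : ℕ) (u : ℝ) : Fin N ⊕ Fin N → ℝ :=
  Sum.elim (fun l => bump n (1 / N) l u) fun l => bump n (1 / N ^ 2) l (remainder n N u)

lemma InCell.bump_eq_ite {n N : ℕ} {I J : Fin N} {u : ℝ} (h : InCell n I J u) (l : Fin N) :
    bump n (1 / N) l u = if l = I then 1 else 0 := by
  have hN : (0 : ℝ) < N := Nat.cast_pos.2 (Fin.pos I)
  have hJ : ((J : ℕ) : ℝ) + 1 ≤ N := by exact_mod_cast J.isLt
  simp only [Fin.ext_iff]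
  refine DNN.bump_eq_ite (by positivity) ⟨le_trans ?_ h.1, h.2.trans ?_⟩ l
  · exact le_add_of_nonneg_right (by positivity)
  · have hJN : (J + 1) * (1 / (N : ℝ) ^ 2) ≤ 1 / N := by
      rw [mul_one_div, div_le_div_iff₀ (by positivity) hN]
      nlinarith
    rw [corner]
    linarith

lemma InCell.digits_eq {n N : ℕ} {I J : Fin N} {u : ℝ} (h : InCell n I J u) :
    digits n N u = Sum.elim (Pi.single I 1) (Pi.single J 1) := by
  have hrem : remainder n N u = u - I * (1 / N) := by
    simp only [remainder, h.bump_eq_ite, mul_ite, mul_one, mul_zero, Finset.sum_ite_eq',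
      Finset.mem_univ, if_true]
  funext l
  rcases l with l | l
  · simp only [digits, Sum.elim_inl, h.bump_eq_ite, Pi.single_apply]
  · simp only [digits, Sum.elim_inr, Pi.single_apply, Fin.ext_iff, hrem]
    refine DNN.bump_eq_ite (by positivity) ⟨?_, ?_⟩ l
    · linarith [h.1, corner.eq_1 I J]
    · linarith [h.2, corner.eq_1 I J]

lemma inCell_of_index {n N k : ℕ} (hk : k < N * N) {u : ℝ}
    (hu : u ∈ Set.Icc ((k : ℝ) / N ^ 2) ((k + 1) / N ^ 2 - (1 / 2) ^ n)) :
    ∃ I J : Fin N, InCell n I J u := by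
  have hN : 0 < N := Nat.pos_of_mul_pos_left (Nat.zero_lt_of_lt hk)
  refine ⟨⟨k / N, Nat.div_lt_of_lt_mul hk⟩, ⟨k % N, Nat.mod_lt _ hN⟩, ?_⟩
  have hcorner : corner (⟨k / N, Nat.div_lt_of_lt_mul hk⟩ : Fin N) ⟨k % N, Nat.mod_lt _ hN⟩ =
      (k : ℝ) / N ^ 2 := by
    have hdiv : (N : ℝ) * (k / N : ℕ) + (k % N : ℕ) = k := by exact_mod_cast Nat.div_add_mod k N
    have hN' : (N : ℝ) ≠ 0 := Nat.cast_ne_zero.2 hN.ne'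
    rw [corner, ← hdiv]
    field_simp
  rwa [InCell, hcorner, ← add_div]

-- The gaps between cells have length `2⁻ⁿ`, so at most one of the three shifts falls into one.
lemma nontrivial_setOf_inCell {n N : ℕ} (hN : 2 ≤ N) (hn : 3 * (1 / 2 : ℝ) ^ n ≤ 1 / N ^ 2) {u : ℝ}
    (hu : u ∈ Set.Icc (0 : ℝ) (1 / 2)) :
    {s : Fin 3 | ∃ I J : Fin N, InCell n I J (u + s * (1 / 2) ^ n)}.Nontrivial := by
  set δ : ℝ := (1 / 2) ^ n
  have hδ : 0 < δ := by positivity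
  have hN2 : (0 : ℝ) < N ^ 2 := by positivity
  set k := ⌊u * N ^ 2⌋₊
  have hk : (k : ℝ) / N ^ 2 ≤ u := (div_le_iff₀ hN2).2 (Nat.floor_le (by have := hu.1; positivity))
  have hk' : u < (k + 1) / N ^ 2 := (lt_div_iff₀ hN2).2 (Nat.lt_floor_add_one _)
  have hkN : k + 1 < N * N := by
    have hN' : (2 : ℝ) ≤ N := by exact_mod_cast hN
    have hlt : (k : ℝ) + 1 < N * N := by
      have := (div_le_iff₀ hN2).1 (hk.trans hu.2)
      nlinarith
    exact_mod_cast hlt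
  have hcell : ∀ s : Fin 3, u + s * δ ≤ (k + 1) / N ^ 2 - δ →
      ∃ I J : Fin N, InCell n I J (u + s * δ) := fun s hs =>
    inCell_of_index (Nat.lt_of_succ_lt hkN) ⟨hk.trans (le_add_of_nonneg_right (by positivity)), hs⟩
  have hnext : ∀ s : Fin 3, (k + 1) / N ^ 2 ≤ u + s * δ →
      ∃ I J : Fin N, InCell n I J (u + s * δ) := fun s hs => by
    have hs2 : (s : ℝ) ≤ 2 := by exact_mod_cast Fin.is_le s
    refine inCell_of_index hkN ⟨by exact_mod_cast hs, ?_⟩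
    have hsδ : (s : ℝ) * δ ≤ 2 * δ := by gcongr
    rw [Nat.cast_add_one, add_div _ (1 : ℝ)]
    linarith
  rcases le_or_gt u ((k + 1) / N ^ 2 - 2 * δ) with h₁ | h₁
  · exact ⟨0, hcell 0 (by norm_num; linarith), 1, hcell 1 (by norm_num; linarith), by decide⟩
  rcases le_or_gt u ((k + 1) / N ^ 2 - δ) with h₂ | h₂
  · exact ⟨0, hcell 0 (by norm_num; linarith), 2, hnext 2 (by norm_num; linarith), by decide⟩
  · exact ⟨1, hnext 1 (by norm_num; linarith), 2, hnext 2 (by norm_num; linarith), by decide⟩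

section Computes

variable {X : Type*} {ι κ : Type} {B : ℝ} {m : ℕ}

lemma computes_two_pow_mul [Fintype κ] (hB : 2 ≤ B) (hm : Fintype.card κ ≤ m) (T : κ → X → ℝ)
    (n : ℕ) : Computes B m T n fun k x => 2 ^ n * T k x := by
  induction n with
  | zero => simpa using Computes.refl T
  | succ n ih =>
    simp only [pow_succ', mul_assoc]
    exact ih.succ hm fun k => ((isNeuron_reg _ k).const_mul 2).mono (by norm_num; exact hB)

lemma computes_bump (hB : 4 ≤ B) (n : ℕ) {N : ℕ} {h : ℝ} (hh : 0 ≤ h) (hNh : N * h ≤ 1)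
    (G : ι → X → ℝ) (i : ι) :
    Computes B (2 * (N + 1)) G (n + 2) fun (l : Fin N) x => bump n h l (G i x) := by
  let T : Fin (N + 1) ⊕ Fin (N + 1) → X → ℝ :=
    Sum.elim (fun l x => G i x - (l * h - (1 / 2) ^ n)) fun l x => G i x - l * h
  have hcard : Fintype.card (Fin (N + 1) ⊕ Fin (N + 1)) ≤ 2 * (N + 1) := by simp; omega
  have hshift : Computes B (2 * (N + 1)) G 1 T := by
    have hδ : (1 / 2 : ℝ) ^ n ≤ 1 := pow_le_one₀ (by norm_num) (by norm_num)
    have hδ' : (0 : ℝ) ≤ (1 / 2) ^ n := by positivity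
    have hgrid : ∀ l : Fin (N + 1), 0 ≤ l * h ∧ l * h ≤ 1 := fun l =>
      ⟨by positivity, hNh.trans' (mul_le_mul_of_nonneg_right (by exact_mod_cast l.is_le) hh)⟩
    have hsub : ∀ c : ℝ, -1 ≤ c → c ≤ 1 → IsNeuron B (fun (_ : Unit) => G i) fun x => G i x - c :=
      fun c hc hc' => ((isNeuron_reg (fun _ : Unit => G i) ()).sub
        (isAffineComb_const _ c)).mono (by linarith [abs_le.2 ⟨hc, hc'⟩])
    refine ((Computes.refl G).reindex fun _ : Unit => i).succ (by simp; omega) ?_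
    rintro (l | l)
    · exact hsub _ (by linarith [hgrid l]) (by linarith [hgrid l])
    · exact hsub _ (by linarith [hgrid l]) (by linarith [hgrid l])
  have hpow := hshift.trans (computes_two_pow_mul (by linarith) hcard T n)
  rw [show n + 2 = 1 + n + 1 by ring]
  refine hpow.succ hcard fun l => ?_
  have hramp : ∀ k : Fin (N + 1), IsNeuron 2 (fun k x => 2 ^ n * T k x)
      fun x => ramp n (k * h) (G i x) := fun k =>
    ((isNeuron_relu _ (Sum.inl k)).sub (isNeuron_relu _ (Sum.inr k))).mono (by norm_num)
  have := (hramp l.castSucc).sub (hramp l.succ)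
  simp only [Fin.val_castSucc, Fin.val_succ, Nat.cast_add_one] at this
  exact this.mono (by linarith)

lemma computes_digits (hB : 4 ≤ B) (n : ℕ) {N : ℕ} (hN : 0 < N) (G : ι → X → ℝ) (i : ι) :
    Computes B (3 * N + 3) G (2 * n + 5) fun l x => digits n N (G i x) l := by
  have hN' : (1 : ℝ) ≤ N := Nat.one_le_cast.2 hN
  have hfirst := (computes_bump (N := N) (h := 1 / N) hB n (by positivity)
    (by rw [mul_one_div_cancel (by positivity)]) G i).sumElim
    (Computes.carry (fun _ : Unit => i) (m := 1) (by simp) (by linarith))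
  let R : Fin N ⊕ Unit → X → ℝ := Sum.elim (fun l x => bump n (1 / N) l (G i x))
    fun _ x => remainder n N (G i x)
  have hrem : Computes B (3 * N + 3) G (n + 2 + 1) R := by
    refine (hfirst.mono (m' := 3 * N + 3) le_rfl (by omega)).succ (by simp; omega) ?_
    rintro (l | _)
    · exact (isNeuron_reg _ (Sum.inl l)).mono (by linarith)
    · have hdigit : ∀ l : Fin N, |(l : ℝ) * (1 / N)| ≤ 1 := fun l => by
        rw [mul_one_div, abs_of_nonneg (by positivity)]
        exact div_le_one_of_le₀ (by exact_mod_cast l.isLt.le) (by positivity)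
      exact ((isNeuron_reg _ (Sum.inr ())).sub ((isNeuron_sum_reg zero_le_one hdigit).comap
        Sum.inl_injective)).mono (by linarith)
  have hN2 : (N : ℝ) * (1 / N ^ 2) ≤ 1 := by
    rw [mul_one_div, pow_two]
    exact div_le_one_of_le₀ (le_mul_of_one_le_left (by positivity) hN') (by positivity)
  have hsecond := (Computes.carry (G := R) (m := N) (L := n + 2) Sum.inl (by simp)
    (by linarith)).sumElim (computes_bump (N := N) hB n (by positivity) hN2 R (Sum.inr ()))
  have := hrem.trans (hsecond.mono le_rfl (by omega))
  rw [show 2 * n + 5 = n + 2 + 1 + (n + 2) by ring]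
  convert this using 1
  funext l x
  rcases l with l | l <;> rfl

end Computes

/-! ### Table lookup -/

/-- The two-layer gate that reads the table `c` at an address given by two one-hot vectors. For
the one-hot encodings of `I` and `J` the outer rectifier keeps the summand `c I J + A ≥ 0` and
kills the summands `c I J' - A ≤ 0`. -/
def lookup {α κ : Type*} [Fintype α] [Fintype κ] (A : ℝ) (c : α → κ → ℝ) (p : α → ℝ)
    (q : κ → ℝ) : ℝ :=
  ∑ J, max (∑ I, (c I J + A) * p I + 2 * A * q J - 2 * A) 0 - A

lemma lookup_single {α κ : Type*} [Fintype α] [DecidableEq α] [Fintype κ] [DecidableEq κ] {A : ℝ}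
    {c : α → κ → ℝ} (hc : ∀ I J, |c I J| ≤ A) (I : α) (J : κ) :
    lookup A c (Pi.single I 1) (Pi.single J 1) = c I J := by
  have hterm : ∀ J', max (∑ I', (c I' J' + A) * (Pi.single I 1 : α → ℝ) I' +
      2 * A * (Pi.single J 1 : κ → ℝ) J' - 2 * A) 0 = if J' = J then c I J + A else 0 := by
    intro J'
    have := abs_le.1 (hc I J')
    simp only [Pi.single_apply, mul_ite, mul_one, mul_zero, Finset.sum_ite_eq', Finset.mem_univ,
      if_true]
    split_ifs with hJ
    · subst hJ
      rw [max_eq_left (by linarith)]; ring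
    · rw [max_eq_right (by linarith)]
  rw [lookup, Finset.sum_congr rfl fun J' _ => hterm J', Finset.sum_ite_eq',
    if_pos (Finset.mem_univ J), add_sub_cancel_right]

/-- The conjunction gate: on one-hot vectors `D i` its positive part indicates that `D i` marks the
letter `I i` for every `i`. -/
def address {ι κ : Type*} [Fintype ι] (D : ι → κ → ℝ) (I : ι → κ) : ℝ :=
  ∑ i, D i (I i) - (Fintype.card ι - 1)

lemma max_address_single {ι κ : Type*} [Fintype ι] [DecidableEq κ] (I : ι → κ) :
    (fun I' => max (address (fun i => Pi.single (I i) 1) I') 0) = Pi.single I 1 := by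
  classical
  funext I'
  rw [address, Pi.single_apply]
  split_ifs with h
  · simp [h]
  · obtain ⟨j, hj⟩ := Function.ne_iff.1 h
    have hle : ∑ i, (Pi.single (I i) 1 : κ → ℝ) (I' i) ≤ ∑ i, if i = j then 0 else 1 := by
      refine Finset.sum_le_sum fun i _ => ?_
      rw [Pi.single_apply]
      split_ifs <;> simp_all
    refine max_eq_right (sub_nonpos.2 (hle.trans ?_))
    simp [Finset.sum_ite, Finset.filter_ne', Finset.card_erase_of_mem, Nat.cast_pred
      (Fintype.card_pos_iff.2 ⟨j⟩)]

section Computes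

variable {X : Type*} {B A : ℝ} {m : ℕ}

lemma computes_lookup {α κ W : Type} [Fintype α] [Fintype κ] [Fintype W] {c : W → α → κ → ℝ}
    (hA : 1 ≤ A) (hAB : 6 * A ≤ B) (hc : ∀ w I J, |c w I J| ≤ A) (G : α ⊕ κ → X → ℝ)
    (hm : Fintype.card α + Fintype.card κ ≤ m) (hm' : Fintype.card W * Fintype.card κ ≤ m) :
    Computes B m G 2 fun w x => lookup A (c w) (fun I => max (G (Sum.inl I) x) 0)
      fun J => max (G (Sum.inr J) x) 0 := by
  let T : W × κ → X → ℝ := fun t x => ∑ I, (c t.1 I t.2 + A) * max (G (Sum.inl I) x) 0 +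
    2 * A * max (G (Sum.inr t.2) x) 0 - 2 * A
  have hA₂ : |2 * A| = 2 * A := abs_of_nonneg (by linarith)
  have hT : Computes B m G 1 T := by
    refine (Computes.refl G).succ (by simpa) fun t => ?_
    have hw : ∀ I, |c t.1 I t.2 + A| ≤ 2 * A := fun I =>
      (abs_add_le _ _).trans (by rw [abs_of_nonneg (by linarith : 0 ≤ A)]; linarith [hc t.1 I t.2])
    have hrow := (isNeuron_sum_relu (G := fun I => G (Sum.inl I)) (by linarith) hw).comap
      Sum.inl_injective
    exact ((hrow.add ((isNeuron_relu G (Sum.inr t.2)).const_mul (2 * A))).sub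
      (isAffineComb_const _ (2 * A))).mono (by linarith)
  refine hT.succ (by simpa) fun w => ?_
  have hsum := (isNeuron_sum_relu (G := fun J => T (w, J)) (w := fun _ => 1) zero_le_one
    (by simp)).comap (Prod.mk_right_injective w)
  simp only [one_mul] at hsum
  exact (hsum.sub (isAffineComb_const _ A)).mono (by rw [abs_of_nonneg] <;> linarith)

lemma computes_address {d N : ℕ} (hd : 0 < d) (hN : 0 < N) (hB : 4 ≤ B) (hdB : d ≤ B)
    (hm : 6 * d * N ^ d ≤ m) (n : ℕ) (u : Fin d → X → ℝ) :
    Computes B m u (2 * n + 6) (Sum.elim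
      (fun I x => address (fun i l => digits n N (u i x) (Sum.inl l)) I)
      fun J x => address (fun i l => digits n N (u i x) (Sum.inr l)) J) := by
  have hNd : d * N ≤ d * N ^ d := Nat.mul_le_mul_left d (Nat.le_self_pow hd.ne' N)
  let D : (Σ _ : Fin d, Fin N ⊕ Fin N) → X → ℝ := fun p x => digits n N (u p.1 x) p.2
  have hD : Computes B m u (2 * n + 5) D := by
    refine (Computes.sigma fun i => computes_digits hB n hN u i).mono le_rfl ?_
    simp only [Finset.sum_const, Finset.card_univ, Fintype.card_fin, smul_eq_mul]
    nlinarith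
  have haddress : ∀ (e : Fin N → Fin N ⊕ Fin N) (I : Fin d → Fin N),
      IsNeuron B D fun x => address (fun i l => digits n N (u i x) (e l)) I := fun e I => by
    have hinj : Function.Injective fun i => (⟨i, e (I i)⟩ : Σ _ : Fin d, Fin N ⊕ Fin N) :=
      fun i j hij => congrArg Sigma.fst hij
    have hsum := (isNeuron_sum_reg (G := fun i => D ⟨i, e (I i)⟩) (w := fun _ => 1) zero_le_one
      (by simp)).comap hinj
    simp only [one_mul] at hsum
    have hd' : (1 : ℝ) ≤ d := by exact_mod_cast hd
    rw [← Fintype.card_fin d] at hd' hdB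
    exact (hsum.sub (isAffineComb_const _ (Fintype.card (Fin d) - 1 : ℝ))).mono
      (by rw [abs_of_nonneg] <;> linarith)
  refine hD.succ ?_ ?_
  · simp only [Fintype.card_sigma, Fintype.card_sum, Fintype.card_fin, Finset.sum_const,
      Finset.card_univ, smul_eq_mul]
    nlinarith
  · rintro (I | J)
    exacts [haddress Sum.inl I, haddress Sum.inr J]

lemma exists_computes_table {d N : ℕ} (hd : 0 < d) (hN : 0 < N) {W : Type} [Fintype W]
    {c : W → (Fin d → Fin N) → (Fin d → Fin N) → ℝ} (hA : 1 ≤ A) (hAB : 6 * A ≤ B)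
    (hdB : d ≤ B) (hc : ∀ w I J, |c w I J| ≤ A) (n : ℕ) (u : Fin d → X → ℝ) :
    ∃ T : W → X → ℝ, Computes B ((Fintype.card W + 6 * d + 2) * N ^ d) u (2 * n + 8) T ∧
      ∀ x I J, (∀ i, InCell n (I i) (J i) (u i x)) → ∀ w, T w x = c w I J := by
  have haddress := computes_address hd hN (by linarith) hdB
    (m := (Fintype.card W + 6 * d + 2) * N ^ d) (Nat.mul_le_mul_right _ (by omega)) n u
  refine ⟨_, haddress.trans (computes_lookup hA hAB hc _ ?_ ?_), fun x I J hIJ w => ?_⟩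
  · simp only [Fintype.card_fun, Fintype.card_fin, ← two_mul]
    exact Nat.mul_le_mul_right _ (by omega)
  · simp only [Fintype.card_fun, Fintype.card_fin]
    exact Nat.mul_le_mul_right _ (by omega)
  · simp only [Sum.elim_inl, Sum.elim_inr, (hIJ _).digits_eq, max_address_single,
      lookup_single (hc w)]

end Computes

/-! ### Piecewise polynomials -/

/-- The words of length at most `q` in the coordinates: they index the monomials of degree at most
`q` in noncommuting variables. -/
abbrev Word (d q : ℕ) : Type := Σ k : Fin (q + 1), Fin k → Fin d

/-- The letters of a word. -/
def Word.toList {d q : ℕ} (w : Word d q) : List (Fin d) := List.ofFn w.2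

lemma Word.length_toList_le {d q : ℕ} (w : Word d q) : w.toList.length ≤ q := by
  rw [Word.toList, List.length_ofFn]
  exact Fin.is_le w.1

section Computes

variable {X : Type*} {A B : ℝ} {d q n : ℕ}

lemma computes_sum_monomialApprox (hA : 1 ≤ A) (hB : 8 ≤ B) (hAB : 2 * A ^ 2 ≤ B)
    (p : Word d q → X → ℝ) (z : Fin d → X → ℝ) :
    Computes B (Fintype.card (Word d q) * (4 + d)) (Sum.elim p z) (q * (n + 4) + 1)
      fun _ : Unit => fun x => ∑ w, monomialApprox A n (p w x) (fun i => z i x) w.toList := by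
  have hword : ∀ w, Computes B (4 + d) (Sum.elim p z) (q * (n + 4)) fun _ : Unit => fun x =>
      monomialApprox A n (p w x) (fun i => z i x) w.toList := fun w => by
    have hselect := (computes_monomialApprox hA hB hAB n (p w) z w.toList).reindex
      fun _ : Unit => Sum.inl ()
    refine Computes.delay ?_ (by simp; omega) (by linarith)
      (Nat.mul_le_mul_right (n + 4) w.length_toList_le)
    refine Computes.comap (Sum.map (fun _ : Unit => w) id) ?_
    have hG : (fun k => Sum.elim p z (Sum.map (fun _ : Unit => w) id k)) =
        Sum.elim (fun _ => p w) z := funext fun k => by rcases k with k | k <;> rfl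
    rw [hG]
    exact hselect
  refine (Computes.pi hword).succ (Nat.le_mul_of_pos_right _ (by omega)) fun _ => ?_
  simpa using (isNeuron_sum_reg (G := fun w x => monomialApprox A n (p w x) (fun i => z i x)
    w.toList) (w := fun _ => 1) zero_le_one (by simp)).mono (by linarith : 1 ≤ B)

/-- The affine rescaling of `[-a, a]` onto `[0, 1/2]`, shifted by `s / 2ⁿ`. -/
def rescale (a : ℝ) (n : ℕ) (s : Fin 3) (t : ℝ) : ℝ := (t + a) / (4 * a) + s * (1 / 2) ^ n

lemma isAffineComb_rescale {a : ℝ} (ha : 0 < a) (n : ℕ) (s : Fin 3) (G : Fin d → X → ℝ)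
    (i : Fin d) : IsAffineComb (3 + 1 / (4 * a)) G fun x => rescale a n s (G i x) := by
  have hs : (s : ℝ) * (1 / 2) ^ n ≤ 2 * 1 := mul_le_mul (by exact_mod_cast s.is_le)
    (pow_le_one₀ (by norm_num) (by norm_num)) (by positivity) (by norm_num)
  have hrescale : ∀ x, rescale a n s (G i x) =
      1 / (4 * a) * G i x + (1 / 4 + s * (1 / 2) ^ n) := fun x => by
    rw [rescale]
    field_simp
    ring
  simp only [hrescale]
  refine (((isAffineComb_apply G i).const_mul (1 / (4 * a))).add (isAffineComb_const _ _)).mono ?_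
  rw [abs_of_nonneg (by positivity), abs_of_nonneg (by positivity)]
  linarith

lemma exists_computes_table_rescale {a : ℝ} (ha : 0 < a) (hd : 0 < d) {N : ℕ} (hN : 0 < N)
    {W : Type} [Fintype W] {c : W → (Fin d → Fin N) → (Fin d → Fin N) → ℝ} (hA : 1 ≤ A)
    (hAB : 6 * A ≤ B) (hdB : d ≤ B) (haB : 3 + 1 / (4 * a) ≤ B) (hc : ∀ w I J, |c w I J| ≤ A)
    (n : ℕ) (s : Fin d → Fin 3) :
    ∃ T : W → (Fin d → ℝ) → ℝ,
      Computes B ((Fintype.card W + 7 * d + 2) * N ^ d) (fun (i : Fin d) (x : Fin d → ℝ) => x i)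
        (2 * n + 9) (Sum.elim T fun i x => x i) ∧
      ∀ x I J, (∀ i, InCell n (I i) (J i) (rescale a n (s i) (x i))) → ∀ w, T w x = c w I J := by
  have hNd : d ≤ d * N ^ d := Nat.le_mul_of_pos_right _ (by positivity)
  let ξ : Fin d → (Fin d → ℝ) → ℝ := fun i x => x i
  let u : Fin d → (Fin d → ℝ) → ℝ := fun i x => rescale a n (s i) (x i)
  obtain ⟨T, hT, hT_eq⟩ := exists_computes_table hd hN hA hAB hdB hc n u
  have hu : Computes B ((Fintype.card W + 7 * d + 2) * N ^ d) ξ 1 (Sum.elim u ξ) := by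
    refine (Computes.refl ξ).succ (by simp; nlinarith) ?_
    rintro (i | i)
    · refine IsAffineComb.mono ?_ haB
      exact IsAffineComb.comap Sum.inl_injective (isAffineComb_rescale ha n (s i) ξ i)
    · exact (isNeuron_reg ξ i).mono (by linarith)
  have hcarry : Computes B d (Sum.elim u ξ) (2 * n + 8) ξ :=
    Computes.carry (G := Sum.elim u ξ) Sum.inr (by simp) (by linarith)
  refine ⟨T, ?_, hT_eq⟩
  rw [show 2 * n + 9 = 1 + (2 * n + 8) by ring]
  refine hu.trans ((Computes.sumElim (Computes.comap Sum.inl hT) hcarry).mono le_rfl ?_)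
  linarith

lemma exists_computes_piecewise {a : ℝ} (ha : 0 < a) (hd : 0 < d) {N : ℕ} (hN : 0 < N)
    (hA : 1 ≤ A) (hB : 8 + d + 6 * A ^ 2 + 1 / (4 * a) ≤ B)
    {c : Word d q → (Fin d → Fin N) → (Fin d → Fin N) → ℝ} (hc : ∀ w I J, |c w I J| ≤ A)
    {p : Fin d → (Fin d → Fin N) → (Fin d → Fin N) → ℝ} (hp : ∀ i I J, |p i I J| ≤ A)
    (n : ℕ) (s : Fin d → Fin 3) :
    ∃ g : (Fin d → ℝ) → ℝ,
      Computes B ((Fintype.card (Word d q) + 1) * (8 * d + 8) * N ^ d) (fun (i : Fin d) x => x i)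
        (2 * n + 11 + q * (n + 4)) (fun _ : Unit => g) ∧
      ∀ x I J, (∀ i, InCell n (I i) (J i) (rescale a n (s i) (x i))) →
        g x = ∑ w, monomialApprox A n (c w I J) (fun i => x i - p i I J) w.toList := by
  have hA2 : A ≤ A ^ 2 := by nlinarith
  have : (0 : ℝ) ≤ d := d.cast_nonneg
  have ha0 : 0 < 1 / (4 * a) := by positivity
  have hNd : 1 ≤ N ^ d := Nat.one_le_pow _ _ hN
  set W := Fintype.card (Word d q)
  obtain ⟨T, hT, hT_eq⟩ := exists_computes_table_rescale (B := B) (c := Sum.elim c p) ha hd hN hA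
    (by linarith) (by linarith) (by linarith)
    (by rintro (w | i) I J; exacts [hc w I J, hp i I J]) n s
  have hm : (Fintype.card (Word d q ⊕ Fin d) + 7 * d + 2) ≤ (W + 1) * (8 * d + 8) := by
    simp only [Fintype.card_sum, Fintype.card_fin]; nlinarith
  let Z : Word d q ⊕ Fin d → (Fin d → ℝ) → ℝ :=
    Sum.elim (fun w => T (Sum.inl w)) fun i x => x i - T (Sum.inr i) x
  have hZ : Computes B ((W + 1) * (8 * d + 8) * N ^ d) (fun i x => x i) (2 * n + 10) Z := by
    refine (hT.mono le_rfl (Nat.mul_le_mul_right _ hm)).succ ?_ ?_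
    · simp only [Fintype.card_sum, Fintype.card_fin]
      exact (by nlinarith : _ ≤ (W + 1) * (8 * d + 8)).trans (Nat.le_mul_of_pos_right _ hNd)
    · rintro (w | i)
      · exact (isNeuron_reg _ (Sum.inl (Sum.inl w))).mono (by linarith)
      · exact ((isNeuron_reg _ (Sum.inr i)).sub (isNeuron_reg _ (Sum.inl (Sum.inr i)))).mono
          (by linarith)
  have hsum := (computes_sum_monomialApprox (B := B) (n := n) hA (by linarith) (by linarith)
    (fun w => T (Sum.inl w)) fun i x => x i - T (Sum.inr i) x).mono le_rfl
    ((Nat.mul_le_mul (Nat.le_succ W) (by omega)).trans (Nat.le_mul_of_pos_right _ hNd) :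
      _ ≤ (W + 1) * (8 * d + 8) * N ^ d)
  rw [show 2 * n + 11 + q * (n + 4) = 2 * n + 10 + (q * (n + 4) + 1) by ring]
  refine ⟨_, hZ.trans hsum, fun x I J hIJ => ?_⟩
  simp only [hT_eq x I J hIJ, Sum.elim_inl, Sum.elim_inr]

end Computes

/-! ### Taylor expansion of Hölder functions -/

section IteratedPartialDerivatives

variable {d k : ℕ} {f : (Fin d → ℝ) → ℝ}

/-- The iterated partial derivative `∂_{i₁} ⋯ ∂_{iₖ} f` along the list `[i₁, …, iₖ]`. -/
def iterPder (l : List (Fin d)) (f : (Fin d → ℝ) → ℝ) : (Fin d → ℝ) → ℝ := l.foldr pder f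

lemma contDiff_pder (i : Fin d) (hf : ContDiff ℝ ((k + 1 : ℕ) : ℕ∞) f) :
    ContDiff ℝ (k : ℕ∞) (pder i f) :=
  (hf.fderiv_right (by norm_cast)).clm_apply contDiff_const

lemma contDiff_iterPder (l : List (Fin d)) (hf : ContDiff ℝ ((k + l.length : ℕ) : ℕ∞) f) :
    ContDiff ℝ (k : ℕ∞) (iterPder l f) := by
  induction l generalizing k with
  | nil => exact hf
  | cons i l ih =>
    refine contDiff_pder i (ih ?_)
    rwa [List.length_cons, ← add_assoc, Nat.add_right_comm] at hf

lemma pder_comm (hf : ContDiff ℝ ((2 : ℕ) : ℕ∞) f) (i j : Fin d) :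
    pder i (pder j f) = pder j (pder i f) := by
  have hdf : Differentiable ℝ (fderiv ℝ f) :=
    (hf.fderiv_right (m := ((1 : ℕ) : ℕ∞)) (by norm_cast)).differentiable (by norm_num)
  have hsecond : ∀ i j x, pder i (pder j f) x =
      fderiv ℝ (fderiv ℝ f) x (Pi.single i 1) (Pi.single j 1) := fun i j x => by
    unfold pder
    rw [fderiv_clm_apply (hdf x) (differentiableAt_const _)]
    simp
  funext x
  rw [hsecond, hsecond]
  exact (hf.contDiffAt.isSymmSndFDerivAt (by simp)) _ _

lemma iterPder_eq_of_perm {l l' : List (Fin d)} (h : l.Perm l')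
    (hf : ContDiff ℝ (l.length : ℕ∞) f) : iterPder l f = iterPder l' f := by
  induction h with
  | nil => rfl
  | cons i _ ih => exact congrArg (pder i) (ih (hf.of_le (by simp)))
  | swap i j l =>
    refine pder_comm (contDiff_iterPder l (hf.of_le ?_)) j i
    simp only [List.length_cons]
    norm_cast
    omega
  | trans h _ ih ih' => rw [ih hf, ih' (by rwa [← h.length_eq])]

lemma pderm_eq_iterPder (α : Fin d → ℕ) (f : (Fin d → ℝ) → ℝ) :
    pderm α f = iterPder ((List.finRange d).flatMap fun i => List.replicate (α i) i) f := by
  have hiterate : ∀ (i : Fin d) n g, (pder i)^[n] g = (List.replicate n i).foldr pder g :=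
    fun i n g => by
      induction n with
      | zero => rfl
      | succ n ih => rw [Function.iterate_succ_apply', ih, List.replicate_succ, List.foldr_cons]
  simp only [pderm, iterPder, hiterate, List.foldr_flatMap]

lemma pderm_count (l : List (Fin d)) (hf : ContDiff ℝ (l.length : ℕ∞) f) :
    pderm (fun i => l.count i) f = iterPder l f := by
  rw [pderm_eq_iterPder]
  refine (iterPder_eq_of_perm (List.perm_iff_count.2 fun i => ?_) hf).symm
  rw [List.count_flatMap, ← List.ofFn_eq_map, List.sum_ofFn]
  simp [List.count_replicate]

lemma hasDerivAt_comp_line (hf : ContDiff ℝ ((1 : ℕ) : ℕ∞) f) (p z : Fin d → ℝ) (t : ℝ) :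
    HasDerivAt (fun t : ℝ => f (p + t • z)) (∑ i, z i * pder i f (p + t • z)) t := by
  have hline : HasDerivAt (fun t : ℝ => p + t • z) z t := by
    simpa using ((hasDerivAt_id t).smul_const z).const_add p
  have hsum : ∀ F : (Fin d → ℝ) →L[ℝ] ℝ, ∑ i, z i * F (Pi.single i 1) = F z := fun F => by
    conv_rhs => rw [pi_eq_sum_univ' z]
    simp
  simp only [pder, hsum]
  exact ((hf.differentiable (by norm_num)) _).hasFDerivAt.comp_hasDerivAt t hline

/-- The `k`-th derivative at `x` of `f` in direction `z`, expanded over all words of length `k`. -/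
def dirDeriv (f : (Fin d → ℝ) → ℝ) (z : Fin d → ℝ) (k : ℕ) (x : Fin d → ℝ) : ℝ :=
  ∑ w : Fin k → Fin d, ((List.ofFn w).map z).prod * iterPder (List.ofFn w) f x

lemma hasDerivAt_dirDeriv {n : ℕ} (hf : ContDiff ℝ (n : ℕ∞) f) (hk : k < n) (p z : Fin d → ℝ)
    (t : ℝ) : HasDerivAt (fun t : ℝ => dirDeriv f z k (p + t • z))
      (dirDeriv f z (k + 1) (p + t • z)) t := by
  have hterm : ∀ w : Fin k → Fin d, HasDerivAt (fun t : ℝ =>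
      ((List.ofFn w).map z).prod * iterPder (List.ofFn w) f (p + t • z))
      (((List.ofFn w).map z).prod * ∑ i, z i * pder i (iterPder (List.ofFn w) f) (p + t • z)) t :=
    fun w => by
      refine (hasDerivAt_comp_line (contDiff_iterPder _ (hf.of_le ?_)) p z t).const_mul _
      rw [List.length_ofFn]
      norm_cast
      omega
  refine (HasDerivAt.fun_sum fun w (_ : w ∈ Finset.univ) => hterm w).congr_deriv ?_
  rw [dirDeriv, ← (Fin.consEquiv fun _ => Fin d).sum_comp, Fintype.sum_prod_type, Finset.sum_comm]
  refine Finset.sum_congr rfl fun w _ => ?_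
  rw [Finset.mul_sum]
  refine Finset.sum_congr rfl fun i _ => ?_
  simp only [Fin.consEquiv_apply, List.ofFn_succ, Fin.cons_zero, Fin.cons_succ, List.map_cons,
    List.prod_cons, iterPder, List.foldr_cons]
  ring

lemma abs_dirDeriv_sub_le {C : ℝ} {x y : Fin d → ℝ} (z : Fin d → ℝ)
    (h : ∀ w : Fin k → Fin d, |iterPder (List.ofFn w) f x - iterPder (List.ofFn w) f y| ≤ C) :
    |dirDeriv f z k x - dirDeriv f z k y| ≤ d ^ k * (‖z‖ ^ k * C) := by
  rw [dirDeriv, dirDeriv, ← Finset.sum_sub_distrib]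
  refine (Finset.abs_sum_le_sum_abs _ _).trans ((Finset.sum_le_card_nsmul _ _ (‖z‖ ^ k * C)
    fun w _ => ?_).trans (by simp))
  have hprod := abs_prod_map_le_pow (fun i => norm_le_pi_norm z i) (List.ofFn w)
  rw [List.length_ofFn] at hprod
  rw [← mul_sub, abs_mul]
  exact mul_le_mul hprod (h w) (abs_nonneg _) (by positivity)

end IteratedPartialDerivatives

lemma abs_sub_taylor_le {C : ℝ} (n : ℕ) (G : ℕ → ℝ → ℝ)
    (hG : ∀ k < n, ∀ t, HasDerivAt (G k) (G (k + 1) t) t)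
    (hC : ∀ t ∈ Set.Icc (0 : ℝ) 1, |G n t - G n 0| ≤ C) {t : ℝ} (ht : t ∈ Set.Icc (0 : ℝ) 1) :
    |G 0 t - ∑ k ∈ Finset.range (n + 1), G k 0 * t ^ k / k.factorial| ≤ C := by
  induction n generalizing G t with
  | zero => simpa using hC t ht
  | succ n ih =>
    let R (t : ℝ) : ℝ := G 0 t - ∑ k ∈ Finset.range (n + 2), G k 0 * t ^ k / k.factorial
    have hR : ∀ t, HasDerivAt R
        (G 1 t - ∑ k ∈ Finset.range (n + 1), G (k + 1) 0 * t ^ k / k.factorial) t := fun t => by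
      refine (hG 0 n.succ_pos t).sub ?_
      convert HasDerivAt.fun_sum fun k (_ : k ∈ Finset.range (n + 2)) =>
        ((hasDerivAt_pow k t).const_mul (G k 0)).div_const (k.factorial : ℝ) using 1
      rw [Finset.sum_range_succ' _ (n + 1)]
      simp only [Nat.cast_zero, zero_mul, mul_zero, zero_div, add_zero]
      refine Finset.sum_congr rfl fun k _ => ?_
      rw [Nat.factorial_succ, Nat.add_sub_cancel, Nat.cast_mul]
      field_simp
    have hR0 : R 0 = 0 := by
      simp only [R]
      rw [Finset.sum_range_succ' _ (n + 1)]
      simp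
    have hR' := (convex_Icc (0 : ℝ) 1).norm_image_sub_le_of_norm_hasDerivWithin_le
      (fun t _ => (hR t).hasDerivWithinAt)
      (fun t ht => ih (fun k => G (k + 1)) (fun k hk => hG (k + 1) (by omega)) hC ht)
      (Set.left_mem_Icc.2 zero_le_one) ht
    rw [hR0, sub_zero, sub_zero, Real.norm_eq_abs, Real.norm_eq_abs, abs_of_nonneg ht.1] at hR'
    have hC0 : 0 ≤ C := (abs_nonneg _).trans (hC 0 (by simp))
    exact hR'.trans (mul_le_of_le_one_right hC0 ht.2)

section HolderBall

variable {d : ℕ} {a β K : ℝ} {f : (Fin d → ℝ) → ℝ}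

lemma exists_pderm_eq_iterPder {n : ℕ} {l : List (Fin d)} (hl : l.length ≤ n)
    (hf : ContDiff ℝ (l.length : ℕ∞) f) : ∃ α : Fin d → Fin (n + 1),
      ∑ i, (α i : ℕ) = l.length ∧ pderm (fun i => (α i : ℕ)) f = iterPder l f :=
  ⟨fun i => ⟨l.count i, Nat.lt_succ_of_le (List.count_le_length.trans hl)⟩,
    by simpa using Multiset.sum_count_eq_card (s := Finset.univ) (m := (l : Multiset (Fin d))),
    pderm_count l hf⟩

lemma zero_mem_cube (ha : 0 ≤ a) : (0 : Fin d → ℝ) ∈ cube a d := fun _ => by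
  simpa using ha

lemma exists_le_of_memHolder (ha : 0 < a) (hd : 0 < d) (hf : memHolder a d β K f) : 0 ≤ K ∧
    (∀ α : Fin d → Fin (⌊β⌋₊ + 1), ((∑ i, (α i : ℕ) : ℕ) : ℝ) < β →
      ∀ x ∈ cube a d, |pderm (fun i => (α i : ℕ)) f x| ≤ K) ∧
    ∀ α : Fin d → Fin (⌊β⌋₊ + 1), ∑ i, (α i : ℕ) = ⌊β⌋₊ → ∀ x ∈ cube a d, ∀ y ∈ cube a d,
      x ≠ y → |pderm (fun i => (α i : ℕ)) f x - pderm (fun i => (α i : ℕ)) f y| ≤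
        K * ‖x - y‖ ^ (β - ⌊β⌋₊) := by
  obtain ⟨-, S, H, hS, hH, hsum⟩ := hf
  have h0 : (0 : Fin d → ℝ) ∈ cube a d := zero_mem_cube ha.le
  have hS0 : ∀ α ∈ Finset.univ.filter fun α : Fin d → Fin (⌊β⌋₊ + 1) =>
      ((∑ i, (α i : ℕ) : ℕ) : ℝ) < β, 0 ≤ S α := fun α hα =>
    (abs_nonneg _).trans (hS α (Finset.mem_filter.1 hα).2 0 h0)
  have hH0 : ∀ α ∈ Finset.univ.filter fun α : Fin d → Fin (⌊β⌋₊ + 1) =>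
      ∑ i, (α i : ℕ) = ⌊β⌋₊, 0 ≤ H α := fun α hα => by
    have hne : (fun _ => a : Fin d → ℝ) ≠ 0 := fun h => ha.ne' (congrFun h ⟨0, hd⟩)
    have hpos : 0 < ‖(fun _ => a : Fin d → ℝ) - 0‖ ^ (β - (⌊β⌋₊ : ℝ)) :=
      Real.rpow_pos_of_pos (norm_sub_pos_iff.2 hne) _
    exact nonneg_of_mul_nonneg_left ((abs_nonneg _).trans
      (hH α (Finset.mem_filter.1 hα).2 _ (fun _ => ⟨by linarith, le_rfl⟩) 0 h0 hne)) hpos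
  have hSsum := Finset.sum_nonneg hS0
  have hHsum := Finset.sum_nonneg hH0
  refine ⟨by linarith, fun α hα x hx => (hS α hα x hx).trans ?_, fun α hα x hx y hy hxy =>
    (hH α hα x hx y hy hxy).trans (mul_le_mul_of_nonneg_right ?_ (by positivity))⟩
  · linarith [Finset.single_le_sum hS0 (Finset.mem_filter.2 ⟨Finset.mem_univ α, hα⟩)]
  · linarith [Finset.single_le_sum hH0 (Finset.mem_filter.2 ⟨Finset.mem_univ α, hα⟩)]

lemma abs_iterPder_le_of_memHolder (ha : 0 < a) (hd : 0 < d) (hf : memHolder a d β K f)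
    {l : List (Fin d)} (hl : l.length < β) {x : Fin d → ℝ} (hx : x ∈ cube a d) :
    |iterPder l f x| ≤ K := by
  have hlβ : l.length ≤ ⌊β⌋₊ := Nat.le_floor hl.le
  obtain ⟨α, hα, hαf⟩ := exists_pderm_eq_iterPder hlβ (hf.1.of_le (by exact_mod_cast hlβ))
  rw [← hαf]
  exact (exists_le_of_memHolder ha hd hf).2.1 α (by rwa [hα]) x hx

lemma abs_iterPder_sub_le_of_memHolder (ha : 0 < a) (hd : 0 < d) (hf : memHolder a d β K f)
    {l : List (Fin d)} (hl : l.length = ⌊β⌋₊) {x y : Fin d → ℝ} (hx : x ∈ cube a d)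
    (hy : y ∈ cube a d) :
    |iterPder l f x - iterPder l f y| ≤ K * ‖x - y‖ ^ (β - ⌊β⌋₊) := by
  obtain ⟨hK, -, hH⟩ := exists_le_of_memHolder ha hd hf
  obtain rfl | hxy := eq_or_ne x y
  · rw [sub_self, abs_zero]
    positivity
  · obtain ⟨α, hα, hαf⟩ := exists_pderm_eq_iterPder hl.le (hf.1.of_le (by rw [hl]))
    rw [← hαf]
    exact hH α (hα.trans hl) x hx y hy hxy

lemma convex_cube (a : ℝ) (d : ℕ) : Convex ℝ (cube a d) :=
  fun _ hx _ hy _ _ hs ht hst i => convex_Icc _ _ (hx i) (hy i) hs ht hst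

lemma exists_abs_pder_le (ha : 0 < a) (hf : ContDiff ℝ ((1 : ℕ) : ℕ∞) f)
    (hK : ∀ x ∈ cube a d, |f x| ≤ K) (i : Fin d) : ∃ x ∈ cube a d, |pder i f x| ≤ K / a := by
  have hmem : ∀ t ∈ Set.Icc (-a) a, 0 + t • (Pi.single i 1 : Fin d → ℝ) ∈ cube a d :=
    fun t ht j => by
      obtain rfl | hj := eq_or_ne j i
      · simpa using ht
      · simpa [hj] using ha.le
  have hderiv := hasDerivAt_comp_line hf 0 (Pi.single i 1)
  obtain ⟨t, ht, hslope⟩ := exists_hasDerivAt_eq_slope _ _ (neg_lt_self ha)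
    (fun t _ => (hderiv t).continuousAt.continuousWithinAt) (fun t _ => hderiv t)
  refine ⟨_, hmem t ⟨ht.1.le, ht.2.le⟩, ?_⟩
  have hpder : ∀ g : Fin d → ℝ, ∑ j, (Pi.single i 1 : Fin d → ℝ) j * g j = g i := fun g => by
    simp [Pi.single_apply]
  rw [hpder] at hslope
  rw [hslope, abs_div, abs_of_pos (by linarith : 0 < a - -a), div_le_div_iff₀ (by linarith) ha]
  have hdiff := (abs_sub _ _).trans (add_le_add (hK _ (hmem a ⟨by linarith, le_rfl⟩))
    (hK _ (hmem (-a) ⟨le_rfl, by linarith⟩)))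
  calc _ ≤ (K + K) * a := mul_le_mul_of_nonneg_right hdiff ha.le
    _ = K * (a - -a) := by ring

-- For integer `β` the Hölder ball bounds only the oscillation of the derivatives of order `β`.
lemma abs_iterPder_le_add_of_memHolder (ha : 0 < a) (hd : 0 < d) (hβ : 0 < β)
    (hf : memHolder a d β K f) {l : List (Fin d)} (hl : l.length ≤ ⌊β⌋₊) {x : Fin d → ℝ}
    (hx : x ∈ cube a d) : |iterPder l f x| ≤ K + K / a := by
  have hK : 0 ≤ K := (exists_le_of_memHolder ha hd hf).1
  have hlβ : (l.length : ℝ) ≤ β := (Nat.le_floor_iff hβ.le).1 hl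
  obtain hlt | heq := hlβ.lt_or_eq
  · exact (abs_iterPder_le_of_memHolder ha hd hf hlt hx).trans
      (le_add_of_nonneg_right (by positivity))
  obtain _ | ⟨i, l⟩ := l
  · exact absurd heq (by simpa using hβ.ne)
  have hfloor : (i :: l).length = ⌊β⌋₊ := by rw [← heq, Nat.floor_natCast]
  have hlt : (l.length : ℝ) < β := by
    rw [← heq]
    simp
  obtain ⟨q, hq, hqK⟩ := exists_abs_pder_le ha
    (contDiff_iterPder (k := 1) l (hf.1.of_le (by rw [← hfloor, List.length_cons, add_comm])))
    (fun x hx => abs_iterPder_le_of_memHolder ha hd hf hlt hx) i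
  have hosc := abs_iterPder_sub_le_of_memHolder ha hd hf hfloor hx hq
  rw [← hfloor, ← heq, sub_self, Real.rpow_zero, mul_one] at hosc
  calc |iterPder (i :: l) f x|
      ≤ |iterPder (i :: l) f x - iterPder (i :: l) f q| + |iterPder (i :: l) f q| := by
        linarith [abs_sub_abs_le_abs_sub (iterPder (i :: l) f x) (iterPder (i :: l) f q)]
    _ ≤ K + K / a := add_le_add hosc hqK

end HolderBall

section TaylorApproximation

variable {d q : ℕ} {a β K C : ℝ} {f : (Fin d → ℝ) → ℝ} {s : Set (Fin d → ℝ)}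

/-- `f` has at every base point `p ∈ s` a polynomial of degree at most `q` in `y - p`, with
coefficients bounded by `C` and indexed by words, that approximates `f` on `s` to order `β`. -/
def IsTaylorApproximable (s : Set (Fin d → ℝ)) (q : ℕ) (β C : ℝ) (f : (Fin d → ℝ) → ℝ) : Prop :=
  ∃ c : Word d q → (Fin d → ℝ) → ℝ, (∀ w, ∀ p ∈ s, |c w p| ≤ C) ∧
    ∀ p ∈ s, ∀ y ∈ s,
      |f y - ∑ w, c w p * (w.toList.map fun i => y i - p i).prod| ≤ C * ‖y - p‖ ^ β

lemma IsTaylorApproximable.mono {C' : ℝ} (h : IsTaylorApproximable s q β C f) (hC : C ≤ C') :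
    IsTaylorApproximable s q β C' f := by
  obtain ⟨c, hc, hf⟩ := h
  exact ⟨c, fun w p hp => (hc w p hp).trans hC, fun p hp y hy =>
    (hf p hp y hy).trans (mul_le_mul_of_nonneg_right hC (by positivity))⟩

lemma abs_dirDeriv_sub_le_of_memHolder (ha : 0 < a) (hd : 0 < d) (hβ : 0 < β)
    (hf : memHolder a d β K f) {p y : Fin d → ℝ} (hp : p ∈ cube a d) (hy : y ∈ cube a d)
    {t : ℝ} (ht : t ∈ Set.Icc (0 : ℝ) 1) :
    |dirDeriv f (y - p) ⌊β⌋₊ (p + t • (y - p)) - dirDeriv f (y - p) ⌊β⌋₊ p| ≤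
      d ^ ⌊β⌋₊ * (K * ‖y - p‖ ^ β) := by
  have hK : 0 ≤ K := (exists_le_of_memHolder ha hd hf).1
  have hfloor : (⌊β⌋₊ : ℝ) ≤ β := Nat.floor_le hβ.le
  have hpow : ‖y - p‖ ^ β = ‖y - p‖ ^ ⌊β⌋₊ * ‖y - p‖ ^ (β - ⌊β⌋₊) := by
    rw [← Real.rpow_natCast,
      ← Real.rpow_add_of_nonneg (norm_nonneg _) (by positivity) (by linarith), add_sub_cancel]
  rw [hpow, mul_left_comm K]
  refine abs_dirDeriv_sub_le _ fun w => (abs_iterPder_sub_le_of_memHolder ha hd hf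
    (by simp) ((convex_cube a d).add_smul_sub_mem hp hy ht) hp).trans ?_
  rw [add_sub_cancel_left, norm_smul, Real.norm_of_nonneg ht.1]
  exact mul_le_mul_of_nonneg_left (Real.rpow_le_rpow (mul_nonneg ht.1 (norm_nonneg _))
    (mul_le_of_le_one_left (norm_nonneg _) ht.2) (by linarith)) hK

lemma isTaylorApproximable_of_memHolder (ha : 0 < a) (hd : 0 < d) (hβ : 0 < β)
    (hf : memHolder a d β K f) :
    IsTaylorApproximable (cube a d) ⌊β⌋₊ β (K + K / a + d ^ ⌊β⌋₊ * K) f := by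
  have hK : 0 ≤ K := (exists_le_of_memHolder ha hd hf).1
  refine ⟨fun w p => iterPder w.toList f p / (w.1 : ℕ).factorial, fun w p hp => ?_,
    fun p hp y hy => ?_⟩
  · rw [abs_div, Nat.abs_cast]
    refine (div_le_self (abs_nonneg _) (by exact_mod_cast Nat.factorial_pos _)).trans ?_
    exact (abs_iterPder_le_add_of_memHolder ha hd hβ hf w.length_toList_le hp).trans
      (le_add_of_nonneg_right (by positivity))
  · have htaylor := abs_sub_taylor_le ⌊β⌋₊ (fun k t => dirDeriv f (y - p) k (p + t • (y - p)))
      (fun k hk t => hasDerivAt_dirDeriv hf.1 hk p (y - p) t)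
      (fun t ht => by
        simpa using abs_dirDeriv_sub_le_of_memHolder ha hd hβ hf hp hy ht)
      (Set.right_mem_Icc.2 zero_le_one)
    have hpoly : ∑ w : Word d ⌊β⌋₊, iterPder w.toList f p / (w.1 : ℕ).factorial *
          (w.toList.map fun i => y i - p i).prod =
        ∑ k ∈ Finset.range (⌊β⌋₊ + 1), dirDeriv f (y - p) k (p + (0 : ℝ) • (y - p)) * 1 ^ k /
          k.factorial := by
      rw [Fintype.sum_sigma, Finset.sum_range]
      refine Finset.sum_congr rfl fun k _ => ?_
      rw [zero_smul, add_zero, one_pow, mul_one, dirDeriv, Finset.sum_div]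
      refine Finset.sum_congr rfl fun w _ => ?_
      rw [mul_comm, ← mul_div_assoc]
      rfl
    have hzero : dirDeriv f (y - p) 0 (p + (1 : ℝ) • (y - p)) = f y := by
      simp [dirDeriv, iterPder]
    rw [hpoly, ← hzero]
    refine htaylor.trans ?_
    rw [← mul_assoc]
    exact mul_le_mul_of_nonneg_right (le_add_of_nonneg_left (by positivity)) (by positivity)

lemma exists_isTaylorApproximable (ha : 0 < a) (hd : 0 < d) (hβ : 0 < β) (K : ℝ) :
    ∃ C, 1 ≤ C ∧ ∀ f, memHolder a d β K f → IsTaylorApproximable (cube a d) ⌊β⌋₊ β C f :=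
  ⟨max 1 (K + K / a + d ^ ⌊β⌋₊ * K), le_max_left _ _, fun _ hf =>
    (isTaylorApproximable_of_memHolder ha hd hβ hf).mono (le_max_right _ _)⟩

end TaylorApproximation

/-! ### The approximation theorem -/

section FixedScale

variable {d q : ℕ} {a A B C β : ℝ} {f : (Fin d → ℝ) → ℝ}

lemma abs_sum_monomialApprox_sub_le {n : ℕ} {c : Word d q → ℝ} {z : Fin d → ℝ} (hA : 1 ≤ A)
    (hz : ∀ i, |z i| ≤ 1) (hc : ∀ w, |c w| + q * (A ^ 2 * (1 / 4) ^ n) ≤ A) :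
    |∑ w, monomialApprox A n (c w) z w.toList - ∑ w, c w * (w.toList.map z).prod| ≤
      Fintype.card (Word d q) * (q * (A ^ 2 * (1 / 4) ^ n)) := by
  have hlen : ∀ w : Word d q, w.toList.length * (A ^ 2 * (1 / 4 : ℝ) ^ n) ≤
      q * (A ^ 2 * (1 / 4) ^ n) := fun w =>
    mul_le_mul_of_nonneg_right (Nat.cast_le.2 w.length_toList_le) (by positivity)
  rw [← Finset.sum_sub_distrib, ← nsmul_eq_mul]
  exact (Finset.abs_sum_le_sum_abs _ _).trans (Finset.sum_le_card_nsmul _ _ _ fun w _ =>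
    (abs_monomialApprox_sub_le hA n hz _ ((add_le_add_right (hlen w) _).trans (hc w))).trans
      (hlen w))

lemma exists_mem_Icc_forall_inCell_abs_sub_le (ha : 0 < a) (n : ℕ) {N : ℕ} (s : Fin 3)
    (I J : Fin N) : ∃ p ∈ Set.Icc (-a) a, ∀ t ∈ Set.Icc (-a) a, InCell n I J (rescale a n s t) →
      |t - p| ≤ 4 * a / N ^ 2 := by
  have haa : -a ≤ a := by linarith
  let r : ℝ := 4 * a * (corner I J - s * (1 / 2) ^ n) - a
  refine ⟨Set.projIcc (-a) a haa r, Subtype.coe_prop _, fun t ht hcell => ?_⟩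
  have hproj : |t - Set.projIcc (-a) a haa r| ≤ |t - r| := by
    have h := Set.abs_projIcc_sub_projIcc haa (c := t) (d := r)
    rwa [Set.projIcc_of_mem haa ht] at h
  have hsub : t - r = 4 * a * (rescale a n s t - corner I J) := by
    simp only [r, rescale]
    field_simp
    ring
  have hwidth : |rescale a n s t - corner I J| ≤ 1 / N ^ 2 := by
    have hδ : (0 : ℝ) ≤ (1 / 2) ^ n := by positivity
    rw [abs_of_nonneg (by linarith [hcell.1])]
    linarith [hcell.2]
  calc |t - Set.projIcc (-a) a haa r| ≤ |t - r| := hproj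
    _ = 4 * a * |rescale a n s t - corner I J| := by rw [hsub, abs_mul, abs_of_pos (by positivity)]
    _ ≤ 4 * a * (1 / N ^ 2) := by gcongr
    _ = 4 * a / N ^ 2 := mul_one_div _ _

lemma exists_computes_on_cells (ha : 0 < a) (hd : 0 < d) (hβ : 0 < β) (hC : 0 < C)
    (hA : C + a + 1 ≤ A) (hB : 8 + d + 6 * A ^ 2 + 1 / (4 * a) ≤ B)
    (hf : IsTaylorApproximable (cube a d) q β C f) {n N : ℕ} (hN : 0 < N) (hNa : 4 * a ≤ N ^ 2)
    (hn : q * (A ^ 2 * (1 / 4) ^ n) ≤ 1) (s : Fin d → Fin 3) : ∃ g : (Fin d → ℝ) → ℝ,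
      Computes B ((Fintype.card (Word d q) + 1) * (8 * d + 8) * N ^ d) (fun (i : Fin d) x => x i)
        (2 * n + 11 + q * (n + 4)) (fun _ : Unit => g) ∧
      ∀ x ∈ cube a d, (∀ i, ∃ I J : Fin N, InCell n I J (rescale a n (s i) (x i))) →
        |g x - f x| ≤ Fintype.card (Word d q) * (q * (A ^ 2 * (1 / 4) ^ n)) +
          C * (4 * a / N ^ 2) ^ β := by
  obtain ⟨c, hc, htaylor⟩ := hf
  choose p hp hpt using fun s I J => exists_mem_Icc_forall_inCell_abs_sub_le ha n (N := N) s I J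
  let P (I J : Fin d → Fin N) (i : Fin d) : ℝ := p (s i) (I i) (J i)
  have hP : ∀ I J, P I J ∈ cube a d := fun I J i => hp _ _ _
  obtain ⟨g, hg, hg_eq⟩ := exists_computes_piecewise (B := B) (A := A) ha hd hN (by linarith) hB
    (c := fun w I J => c w (P I J)) (fun w I J => (hc w _ (hP I J)).trans (by linarith))
    (p := fun i I J => P I J i) (fun i I J => (abs_le.2 (hP I J i)).trans (by linarith)) n s
  refine ⟨g, hg, fun x hx hcell => ?_⟩
  choose I J hIJ using hcell
  have hdist : ∀ i, |x i - P I J i| ≤ 4 * a / N ^ 2 := fun i => hpt _ _ _ _ (hx i) (hIJ i)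
  have hnorm : ‖x - P I J‖ ≤ 4 * a / N ^ 2 := (pi_norm_le_iff_of_nonneg (by positivity)).2 hdist
  have hpoly := abs_sum_monomialApprox_sub_le (A := A) (n := n) (q := q)
    (c := fun w => c w (P I J)) (z := fun i => x i - P I J i) (by linarith)
    (fun i => (hdist i).trans (div_le_one_of_le₀ hNa (by positivity)))
    (fun w => by linarith [hc w _ (hP I J)])
  rw [← hg_eq x I J hIJ] at hpoly
  refine (abs_sub_le _ _ _).trans (add_le_add hpoly ?_)
  rw [abs_sub_comm]
  exact (htaylor _ (hP I J) x hx).trans (mul_le_mul_of_nonneg_left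
    (Real.rpow_le_rpow (norm_nonneg _) hnorm hβ.le) hC.le)

lemma nontrivial_setOf_inCell_rescale (ha : 0 < a) {n N : ℕ} (hN : 2 ≤ N)
    (hn : 3 * (1 / 2 : ℝ) ^ n ≤ 1 / N ^ 2) {t : ℝ} (ht : t ∈ Set.Icc (-a) a) :
    {s : Fin 3 | ∃ I J : Fin N, InCell n I J (rescale a n s t)}.Nontrivial := by
  refine nontrivial_setOf_inCell hN hn ⟨div_nonneg (by linarith [ht.1]) (by positivity), ?_⟩
  rw [div_le_div_iff₀ (by positivity) two_pos]
  linarith [ht.2]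

lemma exists_computes_of_isTaylorApproximable (ha : 0 < a) (hd : 0 < d) (hβ : 0 < β) (hC : 0 < C)
    (hA : C + a + 1 ≤ A) (hB : 8 + d + 6 * A ^ 2 + 1 / (4 * a) ≤ B)
    (hf : IsTaylorApproximable (cube a d) q β C f) {n N : ℕ} (hN : 2 ≤ N) (hNa : 4 * a ≤ N ^ 2)
    (hn : q * (A ^ 2 * (1 / 4) ^ n) ≤ 1) (hnN : 3 * (1 / 2 : ℝ) ^ n ≤ 1 / N ^ 2) :
    ∃ g : (Fin d → ℝ) → ℝ,
      Computes B (3 ^ d * ((Fintype.card (Word d q) + 1) * (8 * d + 8)) * N ^ d)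
        (fun (i : Fin d) x => x i) (2 * n + 11 + q * (n + 4) + 6 * d) (fun _ : Unit => g) ∧
      ∀ x ∈ cube a d, |g x - f x| ≤ Fintype.card (Word d q) * (q * (A ^ 2 * (1 / 4) ^ n)) +
        C * (4 * a / N ^ 2) ^ β := by
  choose v hv hvf using
    exists_computes_on_cells ha hd hβ hC hA hB hf (by omega : 0 < N) hNa hn
  have hB2 : 2 ≤ B := by
    have : 0 ≤ d + 6 * A ^ 2 + 1 / (4 * a) := by positivity
    linarith
  refine ⟨fun x => iterMedian d fun s => v s x, ?_, fun x hx => ?_⟩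
  · have hmedian : 5 * 3 ^ d ≤ 3 ^ d * ((Fintype.card (Word d q) + 1) * (8 * d + 8)) * N ^ d := by
      rw [mul_comm 5, mul_assoc]
      refine Nat.mul_le_mul_left _ ?_
      calc 5 ≤ 1 * (8 * d + 8) * 1 := by omega
        _ ≤ _ := Nat.mul_le_mul (Nat.mul_le_mul_right _ (by omega))
          (Nat.one_le_pow _ _ (by omega))
    exact ((Computes.pi hv).mono le_rfl (by simp [mul_assoc])).trans
      ((computes_iterMedian hB2 d v).mono le_rfl hmedian)
  · rw [abs_sub_comm, Set.mem_Icc_iff_abs_le]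
    refine iterMedian_mem_Icc (fun i => nontrivial_setOf_inCell_rescale ha hN hnN (hx i))
      fun s hs => ?_
    rw [← Set.mem_Icc_iff_abs_le, abs_sub_comm]
    exact hvf s x hx hs

end FixedScale

lemma half_pow_mul_clog_le {P : ℕ} {γ : ℝ} (hγ : γ ≤ P) {M : ℕ} (hM : 0 < M) :
    (1 / 2 : ℝ) ^ (P * Nat.clog 2 M) ≤ 1 / M ^ γ := by
  have hclog : (M : ℝ) ≤ 2 ^ Nat.clog 2 M := by exact_mod_cast Nat.le_pow_clog one_lt_two M
  have hM1 : (1 : ℝ) ≤ M := by exact_mod_cast hM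
  rw [div_pow, one_pow, mul_comm, pow_mul]
  refine one_div_le_one_div_of_le (by positivity) ?_
  calc (M : ℝ) ^ γ ≤ (M : ℝ) ^ (P : ℝ) := Real.rpow_le_rpow_of_exponent_le hM1 hγ
    _ = (M : ℝ) ^ P := Real.rpow_natCast _ _
    _ ≤ (2 ^ Nat.clog 2 M) ^ P := by gcongr

lemma mul_clog_add_le_ceil (u v : ℕ) {M : ℕ} (hM : 2 ≤ M) :
    u * Nat.clog 2 M + v ≤ ⌈((2 * u + v : ℕ) : ℝ) * Real.logb 2 M⌉₊ := by
  have hlog : 1 ≤ Real.logb 2 M := by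
    rw [Real.le_logb_iff_rpow_le one_lt_two (by positivity), Real.rpow_one]
    exact_mod_cast hM
  have hclog : (Nat.clog 2 M : ℝ) ≤ 2 * Real.logb 2 M := by
    have hceil := Nat.ceil_lt_add_one (zero_le_one.trans hlog)
    have hnat : ⌈Real.logb 2 M⌉₊ = Nat.clog 2 M := by exact_mod_cast Real.natCeil_logb_natCast 2 M
    rw [hnat] at hceil
    linarith
  have hcast : ((u * Nat.clog 2 M + v : ℕ) : ℝ) ≤ ((2 * u + v : ℕ) : ℝ) * Real.logb 2 M := by
    push_cast
    calc (u * Nat.clog 2 M + v : ℝ)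
        ≤ u * (2 * Real.logb 2 M) + v * Real.logb 2 M := by
          gcongr
          exact le_mul_of_one_le_right (by positivity) hlog
      _ = (2 * u + v) * Real.logb 2 M := by ring
  exact_mod_cast hcast.trans (Nat.le_ceil _)

section Rate

variable {d q : ℕ} {a C β : ℝ}

lemma quarter_pow_mul_clog_le {P : ℕ} {γ : ℝ} (hγ : γ ≤ P) {M : ℕ} (hM : 0 < M) :
    (1 / 4 : ℝ) ^ (P * Nat.clog 2 M) ≤ 1 / M ^ γ :=
  (pow_le_pow_left₀ (by norm_num) (by norm_num) _).trans (half_pow_mul_clog_le hγ hM)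

lemma three_mul_half_pow_mul_clog_le {P : ℕ} (hP : 3 ≤ P) {M : ℕ} (hM : 3 ≤ M) :
    3 * (1 / 2 : ℝ) ^ (P * Nat.clog 2 M) ≤ 1 / M ^ 2 := by
  have hcube : (1 / 2 : ℝ) ^ (P * Nat.clog 2 M) ≤ 1 / M ^ 3 := by
    simpa using half_pow_mul_clog_le (γ := 3) (by exact_mod_cast hP) (by omega : 0 < M)
  calc 3 * (1 / 2 : ℝ) ^ (P * Nat.clog 2 M) ≤ M * (1 / M ^ 3) := by
        gcongr
        exact_mod_cast hM
    _ = 1 / M ^ 2 := by field_simp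

lemma mul_quarter_pow_mul_clog_le_one {P M : ℕ} (hP : 1 ≤ P) (hM : 0 < M) {t : ℝ} (ht : t ≤ M) :
    t * (1 / 4) ^ (P * Nat.clog 2 M) ≤ 1 := by
  have hquarter : (1 / 4 : ℝ) ^ (P * Nat.clog 2 M) ≤ 1 / M := by
    simpa using quarter_pow_mul_clog_le (γ := 1) (by exact_mod_cast hP) hM
  calc t * (1 / 4 : ℝ) ^ (P * Nat.clog 2 M) ≤ M * (1 / M) := by gcongr
    _ = 1 := mul_one_div_cancel (by positivity)

lemma rpow_div_sq_eq (ha : 0 < a) (β : ℝ) (M : ℕ) :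
    (4 * a / (M : ℝ) ^ 2) ^ β = (4 * a) ^ β / (M : ℝ) ^ (2 * β) := by
  rw [Real.div_rpow (by positivity) (by positivity), Real.rpow_mul (Nat.cast_nonneg M),
    Real.rpow_two]

lemma exists_computes_rpow_rate (ha : 0 < a) (hd : 0 < d) (hβ : 0 < β) (hC : 0 < C) :
    ∃ (B c₁ : ℝ) (u v w : ℕ), 1 ≤ B ∧ 0 < c₁ ∧ 0 < v ∧ 0 < w ∧ ∃ M₀, 2 ≤ M₀ ∧ ∀ M ≥ M₀, ∀ f,
      IsTaylorApproximable (cube a d) q β C f → ∃ g : (Fin d → ℝ) → ℝ,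
        Computes B (w * M ^ d) (fun (i : Fin d) x => x i) (u * Nat.clog 2 M + v)
          (fun _ : Unit => g) ∧
        ∀ x ∈ cube a d, |g x - f x| ≤ c₁ / M ^ (2 * β) := by
  obtain ⟨P, hP⟩ := exists_nat_ge (max 3 (2 * β))
  obtain ⟨hP3, hPβ⟩ := max_le_iff.1 hP
  replace hP3 : 3 ≤ P := by exact_mod_cast hP3
  let A := C + a + 1
  have hB : 0 ≤ d + 6 * A ^ 2 + 1 / (4 * a) := by positivity
  obtain ⟨M₀, hM₀⟩ := exists_nat_ge (3 + 4 * a + q * A ^ 2)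
  have hqA : 0 ≤ q * A ^ 2 := by positivity
  refine ⟨8 + d + 6 * A ^ 2 + 1 / (4 * a),
    Fintype.card (Word d q) * (q * A ^ 2) + C * (4 * a) ^ β, (2 + q) * P, 11 + 4 * q + 6 * d,
    3 ^ d * ((Fintype.card (Word d q) + 1) * (8 * d + 8)), by linarith, by positivity,
    by positivity, by positivity, M₀, by exact_mod_cast (by linarith : (2 : ℝ) ≤ M₀),
    fun M hM f hf => ?_⟩
  have hMR : 3 + 4 * a + q * A ^ 2 ≤ (M : ℝ) := hM₀.trans (Nat.cast_le.2 hM)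
  have hM3 : 3 ≤ M := by exact_mod_cast (by linarith : (3 : ℝ) ≤ M)
  have hM0 : 0 < M := by omega
  have hsq : (M : ℝ) ≤ M ^ 2 := le_self_pow₀ (by linarith) two_ne_zero
  have hmul : q * (A ^ 2 * (1 / 4 : ℝ) ^ (P * Nat.clog 2 M)) ≤ 1 := by
    rw [← mul_assoc]
    exact mul_quarter_pow_mul_clog_le_one (by omega) hM0 (by linarith)
  obtain ⟨g, hg, hgf⟩ := exists_computes_of_isTaylorApproximable ha hd hβ hC le_rfl le_rfl hf
    (by omega) (by linarith) hmul (three_mul_half_pow_mul_clog_le hP3 hM3)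
  refine ⟨g, ?_, fun x hx => (hgf x hx).trans ?_⟩
  · convert hg using 1
    ring
  · rw [rpow_div_sq_eq ha, ← mul_assoc (q : ℝ), ← mul_assoc (Fintype.card _ : ℝ), add_div,
      ← mul_div_assoc, div_eq_mul_one_div (_ * (q * A ^ 2))]
    gcongr
    exact quarter_pow_mul_clog_le hPβ hM0

end Rate

end DNN

theorem dnn_approximation_of_holder_functions_general {a : ℝ} (ha : 0 < a) {d : ℕ} (hd : 0 < d)
    {β : ℝ} (hβ : 0 < β) (K : ℝ) {ν : ℝ} (hν : |ν| ≠ 1) :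
    ∃ CL Cr CB c₁ : ℝ, 0 < CL ∧ 0 < Cr ∧ 0 < CB ∧ 0 < c₁ ∧ ∃ M₀ : ℕ,
      ∀ f₀ : (Fin d → ℝ) → ℝ, memHolder a d β K f₀ → ∀ M : ℕ, M₀ ≤ M →
        ∃ f : (Fin d → ℝ) → ℝ,
          memDNN ν d ⌈CL * Real.logb 2 M⌉₊ ⌈Cr * (M : ℝ) ^ d⌉₊ CB f ∧
          ∀ x ∈ cube a d, |f x - f₀ x| ≤ c₁ / (M : ℝ) ^ (2 * β) := by
  obtain ⟨C, hC, htaylor⟩ := DNN.exists_isTaylorApproximable ha hd hβ K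
  obtain ⟨B, c₁, u, v, w, hB, hc₁, hv, hw, M₀, hM₀, hnet⟩ :=
    DNN.exists_computes_rpow_rate (q := ⌊β⌋₊) ha hd hβ (zero_lt_one.trans_le hC)
  obtain ⟨c, hc, hmem⟩ := DNN.exists_memDNN_of_computes hν
  refine ⟨(2 * u + v : ℕ), (2 * w : ℕ), c * B, c₁, by positivity, by positivity, by positivity,
    hc₁, M₀, fun f₀ hf₀ M hM => ?_⟩
  obtain ⟨f, hf, herror⟩ := hnet M hM f₀ (htaylor f₀ hf₀)
  have hdepth := DNN.mul_clog_add_le_ceil u v (hM₀.trans hM)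
  have hwidth : 2 * (w * M ^ d) ≤ ⌈((2 * w : ℕ) : ℝ) * (M : ℝ) ^ d⌉₊ := by
    rw [← mul_assoc]
    exact_mod_cast (Nat.ceil_natCast _).ge
  have hcard : Fintype.card Unit ≤ w * M ^ d := Nat.mul_pos hw (Nat.pow_pos (by omega))
  exact ⟨f, hmem hB hwidth (by omega) (hf.delay hcard hB hdepth), herror⟩

/-- approximation of β-Hölder functions by fully connected Leaky-ReLU
networks with bounded parameters.  There are constants `C_L, C_r, C_B, c₁ > 0` such that
every `f₀ ∈ H_d^β(K)` is, for every sufficiently large `M`, approximated within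
`c₁ M^{−2β}` in sup-norm on `[−a,a]^d` by a network in
`F_{ρν}^{DNN}(⌈C_L log₂ M⌉, ⌈C_r M^d⌉, C_B)`. -/
theorem dnn_approximation_of_holder_functions
    (a : ℝ) (ha : 1 ≤ a) (d : ℕ) (hd : 0 < d) (β : ℝ) (hβ : 0 < β)
    (K : ℝ) (hK : 1 ≤ K) (ν : ℝ) (hν0 : 0 ≤ ν) (hν1 : ν < 1) :
    ∃ CL Cr CB c₁ : ℝ, 0 < CL ∧ 0 < Cr ∧ 0 < CB ∧ 0 < c₁ ∧
      ∀ f₀ : (Fin d → ℝ) → ℝ, memHolder a d β K f₀ →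
        ∃ M₀ : ℕ, ∀ M : ℕ, M₀ ≤ M →
          ∃ f : (Fin d → ℝ) → ℝ,
            memDNN ν d ⌈CL * Real.logb 2 M⌉₊ ⌈Cr * (M : ℝ) ^ d⌉₊ CB f ∧
            ∀ x ∈ cube a d, |f x - f₀ x| ≤ c₁ / (M : ℝ) ^ (2 * β) := by
  obtain ⟨CL, Cr, CB, c₁, hCL, hCr, hCB, hc₁, M₀, h⟩ :=
    dnn_approximation_of_holder_functions_general (zero_lt_one.trans_le ha) hd hβ K
      (by rw [abs_of_nonneg hν0]; exact hν1.ne)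
  exact ⟨CL, Cr, CB, c₁, hCL, hCr, hCB, hc₁, fun f₀ hf₀ => ⟨M₀, h f₀ hf₀⟩⟩
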